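/- arXiv:2110.04059 — 5 statements merged into one kernel-verified Lean document; each statement's English description precedes it below -/
import Mathlib

section
/- Let I ⊆ ℝ be an open interval, let p, q, r, q₁, r₁, w : I → ℝ be smooth functions and b : I → ℝ smooth and nonvanishing. Define the operators T y = p·y'' + q·y' + r·y, T₁ y = p·y'' + q₁·y' + r₁·y and A y = b·(y' - w·y) acting on smooth functions y : I → ℝ. If A(T y) = T₁(A y) holds on I for every smooth y : I → ℝ, then the function p·(w' + w²) + q·w + r is constant on I; equivalently, there is a constant λ ∈ ℝ such that every nonvanishing smooth ψ : I → ℝ satisfying ψ' = w·ψ obeys p·ψ'' + q·ψ' + r·ψ = λ·ψ on I. -/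
open Set

/-- Second-order operator `T = pD² + qD + r` acting on smooth functions. -/
noncomputable def secondOrderOp (p q r : ℝ → ℝ) (y : ℝ → ℝ) (z : ℝ) : ℝ :=
  p z * deriv (deriv y) z + q z * deriv y z + r z * y z

/-- First-order operator `A = b(D - w)`. -/
noncomputable def firstOrderOp (b w : ℝ → ℝ) (y : ℝ → ℝ) (z : ℝ) : ℝ :=
  b z * (deriv y z - w z * y z)

/-! Let `ψ ≠ 0` solve `ψ' = wψ`; it spans the kernel of `A`. Substituting `ψ' = wψ` twice gives
`Tψ = Fψ` with `F = p(w' + w²) + qw + r`, and then `A(Fψ) = bF'ψ` because `Aψ = 0`. Intertwining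
makes `T` preserve the kernel of `A`, so `bF'ψ = 0`; taking for `ψ` the exponential of a primitive
of `w`, which like `b` never vanishes, one gets `F' = 0`. -/

/-- The Riccati operator associated with `T = pD² + qD + r`: if `w = ψ'/ψ`, then `Tψ = lam * ψ`
reads `riccatiOp p q r w = lam`. -/
noncomputable def riccatiOp (p q r : ℝ → ℝ) (w : ℝ → ℝ) (z : ℝ) : ℝ :=
  p z * (deriv w z + (w z) ^ 2) + q z * w z + r z

section Primitive

variable {E : Type*} [NormedAddCommGroup E] [NormedSpace ℝ E] {s : Set ℝ}

theorem exists_forall_hasDerivAt_of_continuousOn [CompleteSpace E] (hs : IsOpen s)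
    (hs' : s.OrdConnected) {f : ℝ → E} (hf : ContinuousOn f s) :
    ∃ F : ℝ → E, ∀ z ∈ s, HasDerivAt F (f z) z := by
  rcases s.eq_empty_or_nonempty with rfl | ⟨c, hc⟩
  · simp
  · refine ⟨fun u ↦ ∫ t in c..u, f t, fun z hz ↦ ?_⟩
    exact intervalIntegral.integral_hasDerivAt_right
      (hf.mono (hs'.uIcc_subset hc hz)).intervalIntegrable
      (hf.stronglyMeasurableAtFilter hs z hz) (hf.continuousAt (hs.mem_nhds hz))

theorem contDiffOn_add_one_of_hasDerivAt (hs : IsOpen s) {n : ℕ∞} {f F : ℝ → E}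
    (hf : ContDiffOn ℝ n f s) (hF : ∀ z ∈ s, HasDerivAt F (f z) z) :
    ContDiffOn ℝ (n + 1) F s :=
  (contDiffOn_succ_iff_deriv_of_isOpen hs).2
    ⟨fun z hz ↦ (hF z hz).differentiableAt.differentiableWithinAt, by simp,
      hf.congr fun z hz ↦ (hF z hz).deriv⟩

end Primitive

section Operators

variable {s : Set ℝ} {p q r b w ψ : ℝ → ℝ} {z : ℝ}

theorem exists_pos_contDiffOn_hasDerivAt_mul (hs : IsOpen s) (hs' : s.OrdConnected) {n : ℕ∞}
    (hw : ContDiffOn ℝ n w s) :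
    ∃ ψ : ℝ → ℝ, (∀ z, 0 < ψ z) ∧ ContDiffOn ℝ (n + 1) ψ s ∧
      ∀ z ∈ s, HasDerivAt ψ (w z * ψ z) z := by
  obtain ⟨W, hW⟩ := exists_forall_hasDerivAt_of_continuousOn hs hs' hw.continuousOn
  refine ⟨fun z ↦ Real.exp (W z), fun z ↦ Real.exp_pos _,
    (contDiffOn_add_one_of_hasDerivAt hs hw hW).exp, fun z hz ↦ ?_⟩
  simpa only [mul_comm] using (hW z hz).exp

theorem firstOrderOp_congr (hs : IsOpen s) {y₁ y₂ : ℝ → ℝ} (h : EqOn y₁ y₂ s) :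
    EqOn (firstOrderOp b w y₁) (firstOrderOp b w y₂) s := fun z hz ↦ by
  simp only [firstOrderOp, h.deriv hs hz, h hz]

theorem secondOrderOp_congr (hs : IsOpen s) {y₁ y₂ : ℝ → ℝ} (h : EqOn y₁ y₂ s) :
    EqOn (secondOrderOp p q r y₁) (secondOrderOp p q r y₂) s := fun z hz ↦ by
  simp only [secondOrderOp, (h.deriv hs).deriv hs hz, h.deriv hs hz, h hz]

theorem secondOrderOp_zero : secondOrderOp p q r 0 = 0 := by
  ext z
  simp [secondOrderOp]

theorem firstOrderOp_eq_zero_of_hasDerivAt (hψ : HasDerivAt ψ (w z * ψ z) z) :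
    firstOrderOp b w ψ z = 0 := by
  rw [firstOrderOp, hψ.deriv, sub_self, mul_zero]

theorem firstOrderOp_mul_of_hasDerivAt {f : ℝ → ℝ} (hf : DifferentiableAt ℝ f z)
    (hψ : HasDerivAt ψ (w z * ψ z) z) :
    firstOrderOp b w (f * ψ) z = b z * deriv f z * ψ z := by
  rw [firstOrderOp, (hf.hasDerivAt.mul hψ).deriv, Pi.mul_apply]
  ring

theorem secondOrderOp_eqOn_riccatiOp_mul (hs : IsOpen s) (hw : DifferentiableOn ℝ w s)
    (hψ : ∀ z ∈ s, HasDerivAt ψ (w z * ψ z) z) :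
    EqOn (secondOrderOp p q r ψ) (riccatiOp p q r w * ψ) s := fun z hz ↦ by
  have hderiv : EqOn (deriv ψ) (w * ψ) s := fun x hx ↦ (hψ x hx).deriv
  have hderiv2 : deriv (deriv ψ) z = deriv w z * ψ z + w z * (w z * ψ z) :=
    (hderiv.deriv hs hz).trans
      ((hw.differentiableAt (hs.mem_nhds hz)).hasDerivAt.mul (hψ z hz)).deriv
  rw [secondOrderOp, hderiv2, (hψ z hz).deriv, Pi.mul_apply, riccatiOp]
  ring

theorem firstOrderOp_secondOrderOp_of_hasDerivAt (hs : IsOpen s) (hw : DifferentiableOn ℝ w s)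
    (hψ : ∀ z ∈ s, HasDerivAt ψ (w z * ψ z) z) (hz : z ∈ s)
    (hF : DifferentiableAt ℝ (riccatiOp p q r w) z) :
    firstOrderOp b w (secondOrderOp p q r ψ) z = b z * deriv (riccatiOp p q r w) z * ψ z :=
  (firstOrderOp_congr hs (secondOrderOp_eqOn_riccatiOp_mul hs hw hψ) hz).trans
    (firstOrderOp_mul_of_hasDerivAt hF (hψ z hz))

theorem differentiableOn_riccatiOp (hp : DifferentiableOn ℝ p s) (hq : DifferentiableOn ℝ q s)
    (hr : DifferentiableOn ℝ r s) (hw : DifferentiableOn ℝ w s)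
    (hw' : DifferentiableOn ℝ (deriv w) s) : DifferentiableOn ℝ (riccatiOp p q r w) s :=
  ((hp.mul (hw'.add (hw.pow 2))).add (hq.mul hw)).add hr

theorem firstOrderOp_secondOrderOp_eq_zero_of_intertwining (hs : IsOpen s) {p₁ q₁ r₁ y : ℝ → ℝ}
    (hinter : EqOn (firstOrderOp b w (secondOrderOp p q r y))
      (secondOrderOp p₁ q₁ r₁ (firstOrderOp b w y)) s)
    (hy : EqOn (firstOrderOp b w y) 0 s) :
    EqOn (firstOrderOp b w (secondOrderOp p q r y)) 0 s := fun z hz ↦ by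
  rw [hinter hz, secondOrderOp_congr hs hy hz, secondOrderOp_zero]

theorem statement0_general (hs : IsOpen s) (hs' : s.OrdConnected)
    (hp : DifferentiableOn ℝ p s) (hq : DifferentiableOn ℝ q s) (hr : DifferentiableOn ℝ r s)
    {n : ℕ∞} (hn : 2 ≤ n) (hw : ContDiffOn ℝ n w s) (hb : ∀ z ∈ s, b z ≠ 0)
    (hker : ∀ y : ℝ → ℝ, ContDiffOn ℝ (n + 1) y s → EqOn (firstOrderOp b w y) 0 s →
      EqOn (firstOrderOp b w (secondOrderOp p q r y)) 0 s) :
    ∃ lam : ℝ, (∀ z ∈ s, riccatiOp p q r w z = lam) ∧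
      ∀ ψ : ℝ → ℝ, (∀ z ∈ s, HasDerivAt ψ (w z * ψ z) z) →
        ∀ z ∈ s, secondOrderOp p q r ψ z = lam * ψ z := by
  have hw2 : ContDiffOn ℝ 2 w s := hw.of_le (WithTop.coe_le_coe.2 hn)
  have hwd : DifferentiableOn ℝ w s := hw2.differentiableOn (by simp)
  have hF : DifferentiableOn ℝ (riccatiOp p q r w) s :=
    differentiableOn_riccatiOp hp hq hr hwd
      ((hw2.deriv_of_isOpen hs one_add_one_eq_two.le).differentiableOn one_ne_zero)
  obtain ⟨φ, hφ_pos, hφ_smooth, hφ⟩ := exists_pos_contDiffOn_hasDerivAt_mul hs hs' hw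
  have hF_deriv : EqOn (deriv (riccatiOp p q r w)) 0 s := fun z hz ↦ by
    have hbFφ : b z * deriv (riccatiOp p q r w) z * φ z = 0 :=
      (firstOrderOp_secondOrderOp_of_hasDerivAt hs hwd hφ hz
        (hF.differentiableAt (hs.mem_nhds hz))).symm.trans
        (hker φ hφ_smooth (fun x hx ↦ firstOrderOp_eq_zero_of_hasDerivAt (hφ x hx)) hz)
    simpa [hb z hz, (hφ_pos z).ne'] using hbFφ
  obtain ⟨lam, hlam⟩ := hs.exists_is_const_of_deriv_eq_zero hs'.isPreconnected hF hF_deriv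
  refine ⟨lam, hlam, fun ψ hψ z hz ↦ ?_⟩
  rw [secondOrderOp_eqOn_riccatiOp_mul hs hwd hψ hz, Pi.mul_apply, hlam z hz]

end Operators

/-- if `A T = T₁ A` on an open interval, then `p(w' + w²) + q w + r`
is constant there; equivalently there is λ such that any nonvanishing smooth ψ with
ψ' = wψ satisfies `Tψ = λψ`. -/
theorem statement0 (a b : ℝ) (hab : a < b)
    (p q r q₁ r₁ w bf : ℝ → ℝ)
    (hp : ContDiffOn ℝ (⊤ : ℕ∞) p (Ioo a b)) (hq : ContDiffOn ℝ (⊤ : ℕ∞) q (Ioo a b))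
    (hr : ContDiffOn ℝ (⊤ : ℕ∞) r (Ioo a b)) (hq₁ : ContDiffOn ℝ (⊤ : ℕ∞) q₁ (Ioo a b))
    (hr₁ : ContDiffOn ℝ (⊤ : ℕ∞) r₁ (Ioo a b)) (hw : ContDiffOn ℝ (⊤ : ℕ∞) w (Ioo a b))
    (hb : ContDiffOn ℝ (⊤ : ℕ∞) bf (Ioo a b)) (hb0 : ∀ z ∈ Ioo a b, bf z ≠ 0)
    (hinter : ∀ y : ℝ → ℝ, ContDiffOn ℝ (⊤ : ℕ∞) y (Ioo a b) → ∀ z ∈ Ioo a b,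
      firstOrderOp bf w (secondOrderOp p q r y) z
        = secondOrderOp p q₁ r₁ (firstOrderOp bf w y) z) :
    ∃ lam : ℝ,
      (∀ z ∈ Ioo a b, p z * (deriv w z + (w z) ^ 2) + q z * w z + r z = lam) ∧
      (∀ ψ : ℝ → ℝ, ContDiffOn ℝ (⊤ : ℕ∞) ψ (Ioo a b) → (∀ z ∈ Ioo a b, ψ z ≠ 0) →
        (∀ z ∈ Ioo a b, deriv ψ z = w z * ψ z) →
        ∀ z ∈ Ioo a b, secondOrderOp p q r ψ z = lam * ψ z) := by
  obtain ⟨lam, hconst, heigen⟩ := statement0_general isOpen_Ioo ordConnected_Ioo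
    (hp.differentiableOn (by simp)) (hq.differentiableOn (by simp))
    (hr.differentiableOn (by simp)) le_top hw hb0 fun y hy ↦
      firstOrderOp_secondOrderOp_eq_zero_of_intertwining isOpen_Ioo (hinter y hy)
  refine ⟨lam, hconst, fun ψ hψ _ hψw ↦ heigen ψ fun z hz ↦ hψw z hz ▸ ?_⟩
  exact ((hψ.differentiableOn (by simp)).differentiableAt (isOpen_Ioo.mem_nhds hz)).hasDerivAt
end

section
/- Let I ⊆ ℝ be an open interval, let q, r, q₁, r₁, w : I → ℝ be smooth, p, b : I → ℝ smooth and nonvanishing, and λ ∈ ℝ a constant such that p·(w' + w²) + q·w + r = λ identically on I. Define T y = p·y'' + q·y' + r·y, T₁ y = p·y'' + q₁·y' + r₁·y, A y = b·(y' - w·y), and set ŵ = -w - q/p + b'/b and B y = (p/b)·(y' - ŵ·y). If A(T y) = T₁(A y) on I for every smooth y, then for every smooth y : I → ℝ one has B(A y) = T y - λ·y and A(B y) = T₁ y - λ·y on I; that is, T = B A + λ and T₁ = A B + λ. -/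
open Set

/-!
The Riccati relation makes `B A = T - λ` a comparison of coefficients. Associativity and the
intertwining relation then give `(A B) A = A (T - λ) = (T₁ - λ) A`. Both `A B` and `T₁ - λ` have
leading coefficient `p`, so their difference has order at most one and kills the image of `A`.
Since `b ≠ 0`, applying `A` to quadratic polynomials produces every 1-jet at any given point, and
the difference vanishes.
-/

open scoped ContDiff Topology

/-- The function `ŵ = -w - q/p + b'/b` for which `(p/b) (D - ŵ)` is the left factor of
`p D² + q D + r - λ` when the right factor is `b (D - w)`; meaningful only where `p, b ≠ 0`. -/
noncomputable def partnerSlope (p q b w : ℝ → ℝ) (x : ℝ) : ℝ :=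
  -w x - q x / p x + deriv b x / b x

/-- The operator `B = (p/b) (D - ŵ)`, the partner of `A = b (D - w)`. -/
noncomputable def partnerOp (p q b w : ℝ → ℝ) (y : ℝ → ℝ) : ℝ → ℝ :=
  firstOrderOp (fun x => p x / b x) (partnerSlope p q b w) y

section Operators

variable {p q r b c w g y f : ℝ → ℝ} {z : ℝ}

lemma differentiableAt_deriv_of_contDiffAt_two (hf : ContDiffAt ℝ 2 f z) :
    DifferentiableAt ℝ (deriv f) z :=
  (hf.derivWithin (m := 1) (by norm_num)).differentiableAt one_ne_zero

lemma contDiffAt_firstOrderOp {n : ℕ∞ω} (hb : ContDiffAt ℝ n b z) (hw : ContDiffAt ℝ n w z)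
    (hy : ContDiffAt ℝ (n + 1) y z) : ContDiffAt ℝ n (firstOrderOp b w y) z :=
  hb.mul ((hy.derivWithin le_rfl).sub (hw.mul (hy.of_le le_self_add)))

lemma hasDerivAt_firstOrderOp (hb : DifferentiableAt ℝ b z) (hw : DifferentiableAt ℝ w z)
    (hy : DifferentiableAt ℝ y z) (hy' : DifferentiableAt ℝ (deriv y) z) :
    HasDerivAt (firstOrderOp b w y)
      (deriv b z * (deriv y z - w z * y z)
        + b z * (deriv (deriv y) z - (deriv w z * y z + w z * deriv y z))) z :=
  hb.hasDerivAt.mul (hy'.hasDerivAt.sub (hw.hasDerivAt.mul hy.hasDerivAt))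

lemma firstOrderOp_firstOrderOp (hc : DifferentiableAt ℝ c z) (hg : DifferentiableAt ℝ g z)
    (hy : DifferentiableAt ℝ y z) (hy' : DifferentiableAt ℝ (deriv y) z) :
    firstOrderOp b w (firstOrderOp c g y) z =
      secondOrderOp (fun x => b x * c x) (fun x => b x * (deriv c x - c x * (g x + w x)))
        (fun x => b x * (w x * c x * g x - deriv c x * g x - c x * deriv g x)) y z := by
  rw [firstOrderOp, (hasDerivAt_firstOrderOp hc hg hy hy').deriv, firstOrderOp, secondOrderOp]
  ring

lemma firstOrderOp_congr_s1 (h : y =ᶠ[𝓝 z] f) : firstOrderOp b w y z = firstOrderOp b w f z := by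
  rw [firstOrderOp, firstOrderOp, h.deriv_eq, h.eq_of_nhds]

lemma firstOrderOp_sub_const_mul (k : ℝ) (hf : DifferentiableAt ℝ f z)
    (hy : DifferentiableAt ℝ y z) :
    firstOrderOp b w (fun x => f x - k * y x) z =
      firstOrderOp b w f z - k * firstOrderOp b w y z := by
  have hderiv : deriv (fun x => f x - k * y x) z = deriv f z - k * deriv y z :=
    (hf.hasDerivAt.sub (hy.hasDerivAt.const_mul k)).deriv
  rw [firstOrderOp, hderiv, firstOrderOp, firstOrderOp]
  ring

lemma secondOrderOp_sub_const (k : ℝ) :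
    secondOrderOp p q (fun x => r x - k) y z = secondOrderOp p q r y z - k * y z := by
  rw [secondOrderOp, secondOrderOp]
  ring

lemma differentiableAt_secondOrderOp (hp : DifferentiableAt ℝ p z) (hq : DifferentiableAt ℝ q z)
    (hr : DifferentiableAt ℝ r z) (hy : DifferentiableAt ℝ y z)
    (hy' : DifferentiableAt ℝ (deriv y) z) (hy'' : DifferentiableAt ℝ (deriv (deriv y)) z) :
    DifferentiableAt ℝ (secondOrderOp p q r y) z :=
  ((hp.mul hy'').add (hq.mul hy')).add (hr.mul hy)

end Operators

section Partner

variable {p q r b w y : ℝ → ℝ} {z : ℝ}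

lemma differentiableAt_partnerSlope (hp : DifferentiableAt ℝ p z) (hq : DifferentiableAt ℝ q z)
    (hw : DifferentiableAt ℝ w z) (hb : DifferentiableAt ℝ b z)
    (hb' : DifferentiableAt ℝ (deriv b) z) (hpz : p z ≠ 0) (hbz : b z ≠ 0) :
    DifferentiableAt ℝ (partnerSlope p q b w) z :=
  (hw.neg.sub (hq.div hp hpz)).add (hb'.div hb hbz)

lemma partnerOp_firstOrderOp {lam : ℝ} (hb : DifferentiableAt ℝ b z) (hw : DifferentiableAt ℝ w z)
    (hpz : p z ≠ 0) (hbz : b z ≠ 0)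
    (hRiccati : p z * (deriv w z + w z ^ 2) + q z * w z + r z = lam)
    (hy : DifferentiableAt ℝ y z) (hy' : DifferentiableAt ℝ (deriv y) z) :
    partnerOp p q b w (firstOrderOp b w y) z = secondOrderOp p q r y z - lam * y z := by
  rw [partnerOp, firstOrderOp_firstOrderOp hb hw hy hy', ← hRiccati]
  simp only [secondOrderOp, partnerSlope]
  field_simp
  ring

lemma firstOrderOp_partnerOp (hp : DifferentiableAt ℝ p z) (hb : DifferentiableAt ℝ b z)
    (hpz : p z ≠ 0) (hbz : b z ≠ 0) (hslope : DifferentiableAt ℝ (partnerSlope p q b w) z)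
    (hy : DifferentiableAt ℝ y z) (hy' : DifferentiableAt ℝ (deriv y) z) :
    firstOrderOp b w (partnerOp p q b w y) z =
      secondOrderOp p (fun x => q x + deriv p x - 2 * p x * deriv b x / b x)
        (fun x => (p x * w x - deriv p x + p x * deriv b x / b x) * partnerSlope p q b w x
          - p x * deriv (partnerSlope p q b w) x) y z := by
  have hderiv : deriv (fun x => p x / b x) z = (deriv p z * b z - p z * deriv b z) / b z ^ 2 :=
    (hp.hasDerivAt.div hb.hasDerivAt hbz).deriv
  have hsum : partnerSlope p q b w z + w z = deriv b z / b z - q z / p z := by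
    rw [partnerSlope]
    ring
  have hquot : DifferentiableAt ℝ (fun x => p x / b x) z := hp.div hb hbz
  rw [partnerOp, firstOrderOp_firstOrderOp hquot hslope hy hy']
  simp only [secondOrderOp, hderiv, hsum]
  field_simp
  ring

end Partner

section Jets

variable {p q₁ r₁ q₂ r₂ b w : ℝ → ℝ} {z : ℝ}

lemma exists_contDiff_deriv_eq_deriv_deriv_eq (z s t : ℝ) :
    ∃ y : ℝ → ℝ, ContDiff ℝ ∞ y ∧ y z = 0 ∧ deriv y z = s ∧ deriv (deriv y) z = t := by
  have hderiv : deriv (fun x => s * (x - z) + t / 2 * (x - z) ^ 2) = fun x => s + t * (x - z) := by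
    ext x
    have hsub : HasDerivAt (fun x => x - z) 1 x := (hasDerivAt_id x).sub_const z
    refine (((hsub.const_mul s).add ((hsub.pow 2).const_mul (t / 2))).congr_deriv ?_).deriv
    ring
  refine ⟨fun x => s * (x - z) + t / 2 * (x - z) ^ 2, by fun_prop, by simp, ?_, ?_⟩ <;>
    simp [hderiv]

lemma exists_contDiff_firstOrderOp_eq_deriv_eq (hb : DifferentiableAt ℝ b z)
    (hw : DifferentiableAt ℝ w z) (hbz : b z ≠ 0) (s t : ℝ) :
    ∃ y : ℝ → ℝ, ContDiff ℝ ∞ y ∧ firstOrderOp b w y z = s ∧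
      deriv (firstOrderOp b w y) z = t := by
  -- When `y z = 0`, the 1-jet of `b (D - w) y` at `z` is `(b y', b' y' + b (y'' - w y'))`.
  obtain ⟨y, hy, hy₀, hy₁, hy₂⟩ := exists_contDiff_deriv_eq_deriv_deriv_eq z (s / b z)
    ((t - deriv b z * (s / b z)) / b z + w z * (s / b z))
  have hy' : DifferentiableAt ℝ (deriv y) z :=
    differentiableAt_deriv_of_contDiffAt_two (contDiff_infty.1 hy 2).contDiffAt
  refine ⟨y, hy, ?_, ?_⟩
  · rw [firstOrderOp, hy₀, hy₁]
    field_simp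
    ring
  · rw [(hasDerivAt_firstOrderOp hb hw (hy.differentiable (by simp) z) hy').deriv, hy₀, hy₁, hy₂]
    field_simp
    ring

lemma secondOrderOp_eq_of_eq_on_firstOrderOp (hb : DifferentiableAt ℝ b z)
    (hw : DifferentiableAt ℝ w z) (hbz : b z ≠ 0)
    (h : ∀ v : ℝ → ℝ, ContDiff ℝ ∞ v →
      secondOrderOp p q₁ r₁ (firstOrderOp b w v) z = secondOrderOp p q₂ r₂ (firstOrderOp b w v) z)
    (y : ℝ → ℝ) :
    secondOrderOp p q₁ r₁ y z = secondOrderOp p q₂ r₂ y z := by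
  obtain ⟨v, hv, hv₀, hv₁⟩ := exists_contDiff_firstOrderOp_eq_deriv_eq hb hw hbz (y z) (deriv y z)
  have hjet := h v hv
  rw [secondOrderOp, secondOrderOp, hv₀, hv₁] at hjet
  rw [secondOrderOp, secondOrderOp]
  linear_combination hjet

end Jets

section Intertwining

variable {U : Set ℝ} {p q r q₁ r₁ b w y : ℝ → ℝ} {lam z : ℝ}

lemma firstOrderOp_partnerOp_firstOrderOp (hU : IsOpen U)
    (hp : DifferentiableOn ℝ p U) (hq : DifferentiableOn ℝ q U) (hr : DifferentiableOn ℝ r U)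
    (hw : DifferentiableOn ℝ w U) (hb : DifferentiableOn ℝ b U)
    (hp0 : ∀ x ∈ U, p x ≠ 0) (hb0 : ∀ x ∈ U, b x ≠ 0)
    (hRiccati : ∀ x ∈ U, p x * (deriv w x + w x ^ 2) + q x * w x + r x = lam)
    (hz : z ∈ U) (hy : ContDiffOn ℝ 3 y U) :
    firstOrderOp b w (partnerOp p q b w (firstOrderOp b w y)) z =
      firstOrderOp b w (secondOrderOp p q r y) z - lam * firstOrderOp b w y z := by
  have hy₀ {x : ℝ} (hx : x ∈ U) : DifferentiableAt ℝ y x :=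
    (hy.differentiableOn (by simp)).differentiableAt (hU.mem_nhds hx)
  have hderiv : ContDiffOn ℝ 2 (deriv y) U := hy.deriv_of_isOpen hU (by norm_num)
  have hy₁ {x : ℝ} (hx : x ∈ U) : DifferentiableAt ℝ (deriv y) x :=
    (hderiv.differentiableOn (by simp)).differentiableAt (hU.mem_nhds hx)
  have hzU := hU.mem_nhds hz
  have hBA : partnerOp p q b w (firstOrderOp b w y) =ᶠ[𝓝 z]
      fun x => secondOrderOp p q r y x - lam * y x := by
    filter_upwards [hzU] with x hx
    have hxU := hU.mem_nhds hx
    exact partnerOp_firstOrderOp (hb.differentiableAt hxU) (hw.differentiableAt hxU) (hp0 x hx)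
      (hb0 x hx) (hRiccati x hx) (hy₀ hx) (hy₁ hx)
  have hT : DifferentiableAt ℝ (secondOrderOp p q r y) z :=
    differentiableAt_secondOrderOp (hp.differentiableAt hzU) (hq.differentiableAt hzU)
      (hr.differentiableAt hzU) (hy₀ hz) (hy₁ hz)
      (differentiableAt_deriv_of_contDiffAt_two (hderiv.contDiffAt hzU))
  rw [firstOrderOp_congr_s1 hBA, firstOrderOp_sub_const_mul lam hT (hy₀ hz)]

theorem statement1_general (hU : IsOpen U)
    (hp : DifferentiableOn ℝ p U) (hq : DifferentiableOn ℝ q U) (hr : DifferentiableOn ℝ r U)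
    (hw : ContDiffOn ℝ 2 w U) (hb : ContDiffOn ℝ 2 b U)
    (hp0 : ∀ x ∈ U, p x ≠ 0) (hb0 : ∀ x ∈ U, b x ≠ 0)
    (hRiccati : ∀ x ∈ U, p x * (deriv w x + w x ^ 2) + q x * w x + r x = lam)
    (hinter : ∀ v : ℝ → ℝ, ContDiff ℝ ∞ v → ∀ x ∈ U,
      firstOrderOp b w (secondOrderOp p q r v) x = secondOrderOp p q₁ r₁ (firstOrderOp b w v) x)
    (hz : z ∈ U) (hy : ContDiffAt ℝ 2 y z) :
    partnerOp p q b w (firstOrderOp b w y) z = secondOrderOp p q r y z - lam * y z ∧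
      firstOrderOp b w (partnerOp p q b w y) z = secondOrderOp p q₁ r₁ y z - lam * y z := by
  have hzU := hU.mem_nhds hz
  have hpz := hp.differentiableAt hzU
  have hw₀ := hw.differentiableOn two_ne_zero
  have hb₀ := hb.differentiableOn two_ne_zero
  have hwz := hw₀.differentiableAt hzU
  have hbz := hb₀.differentiableAt hzU
  have hslope := differentiableAt_partnerSlope hpz (hq.differentiableAt hzU) hwz hbz
    (differentiableAt_deriv_of_contDiffAt_two (hb.contDiffAt hzU)) (hp0 z hz) (hb0 z hz)
  have hAB {u : ℝ → ℝ} (hu : ContDiffAt ℝ 2 u z) :=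
    firstOrderOp_partnerOp hpz hbz (hp0 z hz) (hb0 z hz) hslope
      (hu.differentiableAt two_ne_zero) (differentiableAt_deriv_of_contDiffAt_two hu)
  refine ⟨partnerOp_firstOrderOp hbz hwz (hp0 z hz) (hb0 z hz) (hRiccati z hz)
    (hy.differentiableAt two_ne_zero) (differentiableAt_deriv_of_contDiffAt_two hy), ?_⟩
  rw [hAB hy, ← secondOrderOp_sub_const]
  refine secondOrderOp_eq_of_eq_on_firstOrderOp hbz hwz (hb0 z hz) (fun v hv => ?_) y
  have hAv : ContDiffAt ℝ 2 (firstOrderOp b w v) z :=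
    contDiffAt_firstOrderOp (hb.contDiffAt hzU) (hw.contDiffAt hzU)
      (contDiff_infty.1 hv 3).contDiffAt
  rw [← hAB hAv, firstOrderOp_partnerOp_firstOrderOp hU hp hq hr hw₀ hb₀ hp0 hb0 hRiccati hz
    (contDiff_infty.1 hv 3).contDiffOn, hinter v hv z hz, secondOrderOp_sub_const]

end Intertwining

/-- an intertwining relation `A T = T₁ A` together with the Riccati
relation `p(w' + w²) + q w + r = λ` yields the factorizations `T = BA + λ` and
`T₁ = AB + λ`, where `B = (p/b)(D - ŵ)` with `ŵ = -w - q/p + b'/b`. -/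
theorem statement1 (a b : ℝ) (hab : a < b)
    (q r q₁ r₁ w p bf : ℝ → ℝ) (lam : ℝ)
    (hq : ContDiffOn ℝ (⊤ : ℕ∞) q (Ioo a b)) (hr : ContDiffOn ℝ (⊤ : ℕ∞) r (Ioo a b))
    (hq₁ : ContDiffOn ℝ (⊤ : ℕ∞) q₁ (Ioo a b)) (hr₁ : ContDiffOn ℝ (⊤ : ℕ∞) r₁ (Ioo a b))
    (hw : ContDiffOn ℝ (⊤ : ℕ∞) w (Ioo a b))
    (hp : ContDiffOn ℝ (⊤ : ℕ∞) p (Ioo a b)) (hp0 : ∀ z ∈ Ioo a b, p z ≠ 0)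
    (hb : ContDiffOn ℝ (⊤ : ℕ∞) bf (Ioo a b)) (hb0 : ∀ z ∈ Ioo a b, bf z ≠ 0)
    (hRiccati : ∀ z ∈ Ioo a b,
      p z * (deriv w z + (w z) ^ 2) + q z * w z + r z = lam)
    (hinter : ∀ y : ℝ → ℝ, ContDiffOn ℝ (⊤ : ℕ∞) y (Ioo a b) → ∀ z ∈ Ioo a b,
      firstOrderOp bf w (secondOrderOp p q r y) z
        = secondOrderOp p q₁ r₁ (firstOrderOp bf w y) z) :
    ∀ y : ℝ → ℝ, ContDiffOn ℝ (⊤ : ℕ∞) y (Ioo a b) → ∀ z ∈ Ioo a b,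
      (firstOrderOp (fun x => p x / bf x)
          (fun x => -w x - q x / p x + deriv bf x / bf x)
          (firstOrderOp bf w y) z
        = secondOrderOp p q r y z - lam * y z) ∧
      (firstOrderOp bf w
          (firstOrderOp (fun x => p x / bf x)
            (fun x => -w x - q x / p x + deriv bf x / bf x) y) z
        = secondOrderOp p q₁ r₁ y z - lam * y z) := by
  intro y hy z hz
  exact statement1_general isOpen_Ioo (hp.differentiableOn (by simp))
    (hq.differentiableOn (by simp)) (hr.differentiableOn (by simp)) (contDiffOn_infty.1 hw 2)
    (contDiffOn_infty.1 hb 2) hp0 hb0 hRiccati (fun v hv => hinter v hv.contDiffOn) hz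
    ((contDiffOn_infty.1 hy 2).contDiffAt (isOpen_Ioo.mem_nhds hz))
end

section
/- Let I ⊆ ℝ be an open interval, p, q₀, r₀ : I → ℝ smooth, and T₀ y = p·y'' + q₀·y' + r₀·y. Let φ₁, …, φₙ : I → ℝ be smooth functions with T₀φⱼ = λⱼφⱼ for pairwise distinct constants λ₁, …, λₙ, and let b₁, …, bₙ : I → ℝ be smooth and nonvanishing. For 1 ≤ k ≤ n let Wₖ(z) = det[(d/dz)^{j-1}φᵢ(z)]_{1≤i,j≤k} be the Wronskian of φ₁, …, φₖ, and assume each Wₖ is nonvanishing on I. Define σₖ = Σ_{j=1}^{k} bⱼ'/bⱼ and υₖ = Wₖ'/Wₖ (with σ₀ = υ₀ = 0), qₖ = q₀ + k·p' - 2p·σₖ, rₖ = r₀ + k·q₀' + ½k(k-1)p'' + υₖ·p' - σₖ·(q₀ + k·p') + (σₖ² - σₖ' + 2υₖ')·p, Tₖ y = p·y'' + qₖ·y' + rₖ·y, wₖ = σ_{k-1} + υₖ - υ_{k-1}, and Aₖ y = bₖ·(y' - wₖ·y). Then for every k = 1, …, n and every smooth y : I → ℝ, Aₖ(T_{k-1}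 y) = Tₖ(Aₖ y) on I. -/
open Set

/-- Wronskian of the functions `φ 1, …, φ k`. -/
noncomputable def wronskian (φ : ℕ → ℝ → ℝ) (k : ℕ) (z : ℝ) : ℝ :=
  (Matrix.of fun i j : Fin k => iteratedDeriv (j : ℕ) (φ (i.1 + 1)) z).det

/-- `σ k = ∑_{j=1}^k bⱼ'/bⱼ`. -/
noncomputable def sigmaGauge (bf : ℕ → ℝ → ℝ) (k : ℕ) (z : ℝ) : ℝ :=
  ∑ j ∈ Finset.Icc 1 k, deriv (bf j) z / bf j z

/-- `υ k = Wₖ'/Wₖ` (with `υ 0 = 0`, as `W₀ ≡ 1`). -/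
noncomputable def upsGauge (φ : ℕ → ℝ → ℝ) (k : ℕ) (z : ℝ) : ℝ :=
  deriv (wronskian φ k) z / wronskian φ k z

/-- Coefficient `qₖ = q₀ + k p' - 2 p σₖ`. -/
noncomputable def qCoeff (p q₀ : ℝ → ℝ) (bf : ℕ → ℝ → ℝ) (k : ℕ) (z : ℝ) : ℝ :=
  q₀ z + k * deriv p z - 2 * p z * sigmaGauge bf k z

/-- Coefficient `rₖ`. -/
noncomputable def rCoeff (p q₀ r₀ : ℝ → ℝ) (bf φ : ℕ → ℝ → ℝ) (k : ℕ) (z : ℝ) : ℝ :=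
  r₀ z + k * deriv q₀ z + (1 / 2 : ℝ) * k * (k - 1) * deriv (deriv p) z
    + upsGauge φ k z * deriv p z
    - sigmaGauge bf k z * (q₀ z + k * deriv p z)
    + ((sigmaGauge bf k z) ^ 2 - deriv (sigmaGauge bf k) z
        + 2 * deriv (upsGauge φ k) z) * p z

/-- `wₖ = σ_{k-1} + υₖ - υ_{k-1}`. -/
noncomputable def wFact (bf φ : ℕ → ℝ → ℝ) (k : ℕ) (z : ℝ) : ℝ :=
  sigmaGauge bf (k - 1) z + upsGauge φ k z - upsGauge φ (k - 1) z

/-!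
If `T ψ = c ψ` with `ψ` nonvanishing, then `w = ψ'/ψ` solves the Riccati equation
`p (w' + w²) + q w + r = c`, so that `T - c` factors through `D - w`. Hence `D - w` intertwines `T`
with another second-order operator, and multiplying by a nonvanishing `b` conjugates the latter
by `b`. It therefore suffices to know that `wₖ₊₁` is the logarithmic derivative of an eigenfunction
of `Tₖ`, and the eigenfunction is `ψ = Aₖ ⋯ A₁ φₖ₊₁`.

The operator `Lⱼ = Aⱼ ⋯ A₁` has order `j`, leading coefficient `b₁ ⋯ bⱼ` and annihilates
`φ₁, …, φⱼ`. Multiplying the Wronskian matrix of `φ₁, …, φₖ₊₁` by the triangular matrix of the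
coefficients of `L₀, …, Lₖ` thus gives the triangular matrix `(Lⱼ φᵢ₊₁)`. Comparing determinants
for `k` and `k + 1` yields `ψ = b₁ ⋯ bₖ Wₖ₊₁ / Wₖ`, whose logarithmic derivative is
`σₖ + υₖ₊₁ - υₖ = wₖ₊₁`.
-/

open Filter Topology
open scoped ContDiff

theorem contDiffOn_deriv {U : Set ℝ} (hU : IsOpen U) {f : ℝ → ℝ} (hf : ContDiffOn ℝ ∞ f U) :
    ContDiffOn ℝ ∞ (deriv f) U :=
  hf.deriv_of_isOpen hU le_rfl

theorem contDiffAt_of_contDiffOn {U : Set ℝ} (hU : IsOpen U) {f : ℝ → ℝ}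
    (hf : ContDiffOn ℝ ∞ f U) {z : ℝ} (hz : z ∈ U) (m : ℕ) : ContDiffAt ℝ m f z :=
  contDiffAt_infty.1 (hf.contDiffAt (hU.mem_nhds hz)) m

theorem differentiableAt_of_contDiffOn {U : Set ℝ} (hU : IsOpen U) {f : ℝ → ℝ}
    (hf : ContDiffOn ℝ ∞ f U) {z : ℝ} (hz : z ∈ U) : DifferentiableAt ℝ f z :=
  (contDiffAt_of_contDiffOn hU hf hz 1).differentiableAt one_ne_zero

theorem deriv_deriv_mul {f g : ℝ → ℝ} {z : ℝ} (hf : ContDiffAt ℝ 2 f z) (hg : ContDiffAt ℝ 2 g z) :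
    deriv (deriv fun x => f x * g x) z
      = deriv (deriv f) z * g z + 2 * (deriv f z * deriv g z) + f z * deriv (deriv g) z := by
  have leibniz := iteratedDeriv_fun_mul (n := 2) hf hg
  simp only [Finset.sum_range_succ, Finset.range_one, Finset.sum_singleton, iteratedDeriv_succ,
    iteratedDeriv_zero, Nat.choose_zero_right, Nat.choose_one_right, Nat.choose_self,
    Nat.cast_one, Nat.cast_ofNat, Nat.sub_zero, Nat.add_one_sub_one, Nat.sub_self, one_mul]
    at leibniz
  rw [leibniz]
  ring

theorem firstOrderOp_eqOn {U : Set ℝ} (hU : IsOpen U) {b w f g : ℝ → ℝ} (h : EqOn f g U) :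
    EqOn (firstOrderOp b w f) (firstOrderOp b w g) U := fun z hz => by
  rw [firstOrderOp, firstOrderOp, h.deriv hU hz, h hz]

theorem firstOrderOp_zero (b w : ℝ → ℝ) : firstOrderOp b w 0 = 0 := by
  ext z
  simp [firstOrderOp]

theorem firstOrderOp_const_smul (b w : ℝ → ℝ) (c : ℝ) (f : ℝ → ℝ) :
    firstOrderOp b w (c • f) = c • firstOrderOp b w f := by
  ext z
  simp only [firstOrderOp, deriv_const_smul_field, Pi.smul_apply, smul_eq_mul]
  ring

theorem firstOrderOp_apply_eq_zero (b : ℝ → ℝ) {w ψ : ℝ → ℝ} {z : ℝ} (hψ : ψ z ≠ 0)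
    (hw : w z = logDeriv ψ z) : firstOrderOp b w ψ z = 0 := by
  rw [firstOrderOp, hw, logDeriv_apply, div_mul_cancel₀ _ hψ, sub_self, mul_zero]

theorem contDiffOn_firstOrderOp {U : Set ℝ} (hU : IsOpen U) {b w y : ℝ → ℝ}
    (hb : ContDiffOn ℝ ∞ b U) (hw : ContDiffOn ℝ ∞ w U) (hy : ContDiffOn ℝ ∞ y U) :
    ContDiffOn ℝ ∞ (firstOrderOp b w y) U :=
  hb.mul ((contDiffOn_deriv hU hy).sub (hw.mul hy))

theorem contDiffOn_logDeriv {U : Set ℝ} (hU : IsOpen U) {f : ℝ → ℝ} (hf : ContDiffOn ℝ ∞ f U)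
    (hf0 : ∀ z ∈ U, f z ≠ 0) : ContDiffOn ℝ ∞ (logDeriv f) U :=
  (contDiffOn_deriv hU hf).div hf hf0

theorem contDiffOn_iteratedDeriv {U : Set ℝ} (hU : IsOpen U) {f : ℝ → ℝ}
    (hf : ContDiffOn ℝ ∞ f U) (m : ℕ) : ContDiffOn ℝ ∞ (iteratedDeriv m f) U := by
  induction m with
  | zero => rwa [iteratedDeriv_zero]
  | succ m ih =>
    rw [iteratedDeriv_succ]
    exact contDiffOn_deriv hU ih

theorem deriv_logDeriv {f : ℝ → ℝ} {z : ℝ} (hf : ContDiffAt ℝ 2 f z) (hf0 : f z ≠ 0) :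
    deriv (logDeriv f) z = deriv (deriv f) z / f z - logDeriv f z ^ 2 := by
  have hf' : DifferentiableAt ℝ (deriv f) z :=
    (hf.derivWithin (m := 1) (by norm_num)).differentiableAt one_ne_zero
  rw [logDeriv, deriv_div hf' (hf.differentiableAt two_ne_zero) hf0, Pi.div_apply]
  field_simp

theorem riccati_logDeriv {p q r ψ : ℝ → ℝ} {c z : ℝ} (hψ : ContDiffAt ℝ 2 ψ z) (hψ0 : ψ z ≠ 0)
    (heig : secondOrderOp p q r ψ z = c * ψ z) :
    p z * (deriv (logDeriv ψ) z + logDeriv ψ z ^ 2) + q z * logDeriv ψ z + r z = c := by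
  rw [secondOrderOp] at heig
  rw [deriv_logDeriv hψ hψ0, logDeriv_apply]
  field_simp
  linear_combination ψ z * heig

/-- The coefficient of `D` in the Darboux transform of `pD² + qD + r` with gauge `b`. -/
noncomputable def darbouxQ (p q b : ℝ → ℝ) (z : ℝ) : ℝ :=
  q z + deriv p z - 2 * p z * logDeriv b z

/-- The coefficient of `D⁰` in the Darboux transform of `pD² + qD + r` with intertwiner
`b(D - w)`. -/
noncomputable def darbouxR (p q r b w : ℝ → ℝ) (z : ℝ) : ℝ :=
  r z + deriv q z + w z * deriv p z - logDeriv b z * (q z + deriv p z)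
    + (logDeriv b z ^ 2 - deriv (logDeriv b) z + 2 * deriv w z) * p z

theorem secondOrderOp_gauge {p q r b u : ℝ → ℝ} {z : ℝ} (hb : ContDiffAt ℝ 2 b z)
    (hu : ContDiffAt ℝ 2 u z) (hb0 : b z ≠ 0) :
    secondOrderOp p (fun x => q x - 2 * p x * logDeriv b x)
        (fun x => r x - logDeriv b x * q x + (logDeriv b x ^ 2 - deriv (logDeriv b) x) * p x)
        (fun x => b x * u x) z
      = b z * secondOrderOp p q r u z := by
  simp only [secondOrderOp]
  rw [deriv_deriv_mul hb hu, deriv_logDeriv hb hb0, logDeriv_apply,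
    deriv_fun_mul (hb.differentiableAt two_ne_zero) (hu.differentiableAt two_ne_zero)]
  field_simp
  ring

theorem deriv_riccati {p q r w : ℝ → ℝ} {c z : ℝ} (hp : DifferentiableAt ℝ p z)
    (hq : DifferentiableAt ℝ q z) (hr : DifferentiableAt ℝ r z) (hw : ContDiffAt ℝ 2 w z)
    (hric : ∀ᶠ x in 𝓝 z, p x * (deriv w x + w x ^ 2) + q x * w x + r x = c) :
    deriv p z * (deriv w z + w z ^ 2) + p z * (deriv (deriv w) z + 2 * w z * deriv w z)
      + (deriv q z * w z + q z * deriv w z) + deriv r z = 0 := by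
  have hw₀ := (hw.differentiableAt two_ne_zero).hasDerivAt
  have hw₁ := ((hw.derivWithin (m := 1) (by norm_num)).differentiableAt one_ne_zero).hasDerivAt
  have hconst := (hasDerivAt_const z c).congr_of_eventuallyEq hric
  have hexpand := ((hp.hasDerivAt.mul (hw₁.add (hw₀.pow 2))).add (hq.hasDerivAt.mul hw₀)).add
    hr.hasDerivAt
  have h := hexpand.unique hconst
  simp only [Pi.add_apply, Pi.pow_apply] at h
  linear_combination h

theorem darboux_intertwining {p q r w y : ℝ → ℝ} {c z : ℝ} (hp : DifferentiableAt ℝ p z)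
    (hq : DifferentiableAt ℝ q z) (hr : DifferentiableAt ℝ r z) (hw : ContDiffAt ℝ 2 w z)
    (hy : ContDiffAt ℝ 3 y z)
    (hric : ∀ᶠ x in 𝓝 z, p x * (deriv w x + w x ^ 2) + q x * w x + r x = c) :
    deriv (secondOrderOp p q r y) z - w z * secondOrderOp p q r y z
      = secondOrderOp p (fun x => q x + deriv p x)
          (fun x => r x + deriv q x + w x * deriv p x + 2 * deriv w x * p x)
          (fun x => deriv y x - w x * y x) z := by
  have hy₁ : ContDiffAt ℝ 2 (deriv y) z := hy.derivWithin (by norm_num)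
  have hy₂ : ContDiffAt ℝ 1 (deriv (deriv y)) z := hy₁.derivWithin (by norm_num)
  have hwy : ContDiffAt ℝ 2 (fun x => w x * y x) z := hw.mul (hy.of_le (by norm_num))
  have hdy := hy.differentiableAt three_ne_zero
  have hdy₁ := hy₁.differentiableAt two_ne_zero
  have hdw := hw.differentiableAt two_ne_zero
  have hdT : deriv (secondOrderOp p q r y) z
      = deriv p z * deriv (deriv y) z + p z * deriv (deriv (deriv y)) z
        + (deriv q z * deriv y z + q z * deriv (deriv y) z) + (deriv r z * y z + r z * deriv y z) :=
    (((hp.hasDerivAt.mul (hy₂.differentiableAt one_ne_zero).hasDerivAt).add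
      (hq.hasDerivAt.mul hdy₁.hasDerivAt)).add (hr.hasDerivAt.mul hdy.hasDerivAt)).deriv
  have hdA : deriv (fun x => deriv y x - w x * y x) z
      = deriv (deriv y) z - (deriv w z * y z + w z * deriv y z) := by
    rw [deriv_fun_sub hdy₁ (hdw.fun_mul hdy), deriv_fun_mul hdw hdy]
  have hddA : deriv (deriv fun x => deriv y x - w x * y x) z = deriv (deriv (deriv y)) z
      - (deriv (deriv w) z * y z + 2 * (deriv w z * deriv y z) + w z * deriv (deriv y) z) := by
    have h := iteratedDeriv_fun_sub hy₁ hwy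
    simp only [iteratedDeriv_succ, iteratedDeriv_zero] at h
    rw [h, deriv_deriv_mul hw (hy.of_le (by norm_num))]
  rw [hdT, secondOrderOp, secondOrderOp, hdA, hddA]
  linear_combination y z * deriv_riccati hp hq hr hw hric

theorem gauged_darboux_intertwining {p q r w b y : ℝ → ℝ} {c z : ℝ} (hp : DifferentiableAt ℝ p z)
    (hq : DifferentiableAt ℝ q z) (hr : DifferentiableAt ℝ r z) (hw : ContDiffAt ℝ 2 w z)
    (hb : ContDiffAt ℝ 2 b z) (hb0 : b z ≠ 0) (hy : ContDiffAt ℝ 3 y z)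
    (hric : ∀ᶠ x in 𝓝 z, p x * (deriv w x + w x ^ 2) + q x * w x + r x = c) :
    firstOrderOp b w (secondOrderOp p q r y) z
      = secondOrderOp p (darbouxQ p q b) (darbouxR p q r b w) (firstOrderOp b w y) z := by
  have hAy : ContDiffAt ℝ 2 (fun x => deriv y x - w x * y x) z :=
    (hy.derivWithin (by norm_num)).sub (hw.mul (hy.of_le (by norm_num)))
  have hA : firstOrderOp b w y = fun x => b x * (deriv y x - w x * y x) := rfl
  rw [firstOrderOp, darboux_intertwining hp hq hr hw hy hric, ← secondOrderOp_gauge hb hAy hb0, hA]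
  simp only [secondOrderOp, darbouxQ, darbouxR]
  ring

theorem firstOrderOp_sum_mul_iteratedDeriv (b w : ℝ → ℝ) {s : Finset ℕ} {c : ℕ → ℝ → ℝ}
    {y : ℝ → ℝ} {z : ℝ} (hc : ∀ m ∈ s, DifferentiableAt ℝ (c m) z)
    (hy : ∀ m ∈ s, DifferentiableAt ℝ (iteratedDeriv m y) z) :
    firstOrderOp b w (fun x => ∑ m ∈ s, c m x * iteratedDeriv m y x) z
      = ∑ m ∈ s, (firstOrderOp b w (c m) z * iteratedDeriv m y z
          + b z * c m z * iteratedDeriv (m + 1) y z) := by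
  rw [firstOrderOp, deriv_fun_sum fun m hm => (hc m hm).fun_mul (hy m hm), Finset.mul_sum,
    ← Finset.sum_sub_distrib, Finset.mul_sum]
  refine Finset.sum_congr rfl fun m hm => ?_
  rw [deriv_fun_mul (hc m hm) (hy m hm), iteratedDeriv_succ, firstOrderOp]
  ring

/-- On functions smooth on `U`, the map `L` acts as the differential operator
`ℓ Dᵏ + c (k - 1) Dᵏ⁻¹ + ⋯ + c 0` with coefficients smooth on `U`. The order is at most `k`, since
`ℓ` may vanish. -/
def IsDiffOpOn (U : Set ℝ) (k : ℕ) (ℓ : ℝ → ℝ) (L : (ℝ → ℝ) → ℝ → ℝ) : Prop :=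
  ∃ c : ℕ → ℝ → ℝ, (∀ m, ContDiffOn ℝ ∞ (c m) U) ∧ c k = ℓ ∧ (∀ m > k, c m = 0) ∧
    ∀ y, ContDiffOn ℝ ∞ y U →
      EqOn (L y) (fun z => ∑ m ∈ Finset.range (k + 1), c m z * iteratedDeriv m y z) U

namespace IsDiffOpOn

variable {U : Set ℝ} {k : ℕ}

protected theorem id (U : Set ℝ) : IsDiffOpOn U 0 1 fun y => y := by
  refine ⟨Pi.single 0 1, fun m => ?_, Pi.single_eq_same 0 1,
    fun m hm => Pi.single_eq_of_ne hm.ne' 1, fun y _ z _ => by simp⟩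
  rcases eq_or_ne m 0 with rfl | hm
  · rw [Pi.single_eq_same]
    exact contDiffOn_const
  · rw [Pi.single_eq_of_ne hm]
    exact contDiffOn_const

theorem firstOrderOp_comp {ℓ b w : ℝ → ℝ} {L : (ℝ → ℝ) → ℝ → ℝ} (hU : IsOpen U)
    (hL : IsDiffOpOn U k ℓ L) (hb : ContDiffOn ℝ ∞ b U) (hw : ContDiffOn ℝ ∞ w U) :
    IsDiffOpOn U (k + 1) (b * ℓ) fun y => firstOrderOp b w (L y) := by
  obtain ⟨c, hc, hck, hc0, hLc⟩ := hL
  let c' : ℕ → ℝ → ℝ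
    | 0 => firstOrderOp b w (c 0)
    | m + 1 => firstOrderOp b w (c (m + 1)) + b * c m
  have hAc (m : ℕ) := contDiffOn_firstOrderOp hU hb hw (hc m)
  have hAc_top : firstOrderOp b w (c (k + 1)) = 0 := by
    rw [hc0 (k + 1) k.lt_succ_self, firstOrderOp_zero]
  refine ⟨c', ?_, ?_, ?_, fun y hy z hz => ?_⟩
  · rintro (_ | m)
    exacts [hAc 0, (hAc (m + 1)).add (hb.mul (hc m))]
  · simp only [c', hAc_top, zero_add, hck]
  · rintro (_ | m) hm
    · omega
    · simp only [c', hc0 (m + 1) (by omega), hc0 m (by omega), firstOrderOp_zero, mul_zero,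
        add_zero]
  beta_reduce
  rw [firstOrderOp_eqOn hU (hLc y hy) hz, firstOrderOp_sum_mul_iteratedDeriv b w
    (fun m _ => differentiableAt_of_contDiffOn hU (hc m) hz)
    (fun m _ => differentiableAt_of_contDiffOn hU (contDiffOn_iteratedDeriv hU hy m) hz),
    Finset.sum_add_distrib, Finset.sum_range_succ' _ (k + 1), Finset.sum_range_succ' _ k]
  simp only [c', Pi.add_apply, Pi.mul_apply, add_mul, Finset.sum_add_distrib]
  rw [Finset.sum_range_succ (fun m => firstOrderOp b w (c (m + 1)) z * _), hAc_top, Pi.zero_apply]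
  ring

theorem wronskian_mul_prod {φ ℓ : ℕ → ℝ → ℝ} {L : ℕ → (ℝ → ℝ) → ℝ → ℝ} {z : ℝ}
    (hL : ∀ j < k, IsDiffOpOn U j (ℓ j) (L j)) (hφ : ∀ i < k, ContDiffOn ℝ ∞ (φ (i + 1)) U)
    (hz : z ∈ U) (hker : ∀ j < k, ∀ i < j, L j (φ (i + 1)) z = 0) :
    wronskian φ k z * ∏ j ∈ Finset.range k, ℓ j z = ∏ j ∈ Finset.range k, L j (φ (j + 1)) z := by
  choose! c _ hc_top hc_zero hLc using hL
  let C : Matrix (Fin k) (Fin k) ℝ := .of fun m j => c j m z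
  have hC : C.IsUpperTriangular := fun m j hjm => congrFun (hc_zero j j.2 m hjm) z
  have hWC : (Matrix.of fun i j : Fin k => iteratedDeriv (j : ℕ) (φ (i.1 + 1)) z) * C
      = .of fun i j : Fin k => L j (φ (i.1 + 1)) z := by
    ext i j
    simp only [Matrix.mul_apply, Matrix.of_apply, C]
    have hext : ∑ m ∈ Finset.range (j + 1), c j m z * iteratedDeriv m (φ (i + 1)) z
        = ∑ m ∈ Finset.range k, c j m z * iteratedDeriv m (φ (i + 1)) z := by
      refine Finset.sum_subset (Finset.range_mono j.2) fun m _ hm => ?_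
      rw [hc_zero j j.2 m (by simpa using hm), Pi.zero_apply, zero_mul]
    rw [(hLc j j.2 _ (hφ i i.2) hz).trans hext, Finset.sum_range]
    exact Finset.sum_congr rfl fun m _ => mul_comm _ _
  have hN : (Matrix.of fun i j : Fin k => L j (φ (i.1 + 1)) z).IsLowerTriangular :=
    fun i j hij => hker j j.2 i hij
  have hdet := congrArg Matrix.det hWC
  rw [Matrix.det_mul, Matrix.det_of_isUpperTriangular hC, Matrix.det_of_isLowerTriangular _ hN]
    at hdet
  simpa only [wronskian, Finset.prod_range, C, Matrix.of_apply, hc_top _ (Fin.is_lt _)] using hdet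

theorem apply_mul_wronskian {φ ℓ : ℕ → ℝ → ℝ} {L : ℕ → (ℝ → ℝ) → ℝ → ℝ} {z : ℝ}
    (hL : ∀ j ≤ k, IsDiffOpOn U j (ℓ j) (L j)) (hφ : ∀ i ≤ k, ContDiffOn ℝ ∞ (φ (i + 1)) U)
    (hz : z ∈ U) (hℓ : ∀ j < k, ℓ j z ≠ 0) (hker : ∀ j ≤ k, ∀ i < j, L j (φ (i + 1)) z = 0) :
    L k (φ (k + 1)) z * wronskian φ k z = ℓ k z * wronskian φ (k + 1) z := by
  have hk := wronskian_mul_prod (fun j hj => hL j hj.le) (fun i hi => hφ i hi.le) hz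
    fun j hj => hker j hj.le
  have hk1 := wronskian_mul_prod (k := k + 1) (fun j hj => hL j (by omega))
    (fun i hi => hφ i (by omega)) hz fun j hj => hker j (by omega)
  rw [Finset.prod_range_succ, Finset.prod_range_succ, ← hk] at hk1
  have hprod : ∏ j ∈ Finset.range k, ℓ j z ≠ 0 :=
    Finset.prod_ne_zero_iff.2 fun j hj => hℓ j (Finset.mem_range.1 hj)
  apply mul_right_cancel₀ hprod
  linear_combination -hk1

end IsDiffOpOn

/-- The operator `Tₖ` of the Crum sequence. -/
noncomputable abbrev crumOp (p q₀ r₀ : ℝ → ℝ) (φ bf : ℕ → ℝ → ℝ) (k : ℕ) :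
    (ℝ → ℝ) → ℝ → ℝ :=
  secondOrderOp p (qCoeff p q₀ bf k) (rCoeff p q₀ r₀ bf φ k)

/-- The intertwiner `Aₖ` of the Crum sequence. -/
noncomputable abbrev crumIntertwiner (φ bf : ℕ → ℝ → ℝ) (k : ℕ) : (ℝ → ℝ) → ℝ → ℝ :=
  firstOrderOp (bf k) (wFact bf φ k)

/-- The composition `Aₖ ⋯ A₁` of the intertwiners. -/
noncomputable def crumChain (φ bf : ℕ → ℝ → ℝ) : ℕ → (ℝ → ℝ) → ℝ → ℝ
  | 0, y => y
  | k + 1, y => crumIntertwiner φ bf (k + 1) (crumChain φ bf k y)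

/-- The product `b₁ ⋯ bₖ`, which is the leading coefficient of `Aₖ ⋯ A₁`. -/
noncomputable def gaugeProd (bf : ℕ → ℝ → ℝ) (k : ℕ) (z : ℝ) : ℝ :=
  ∏ j ∈ Finset.Icc 1 k, bf j z

theorem gaugeProd_zero (bf : ℕ → ℝ → ℝ) : gaugeProd bf 0 = 1 := by
  ext z
  simp [gaugeProd]

theorem gaugeProd_succ (bf : ℕ → ℝ → ℝ) (k : ℕ) :
    gaugeProd bf (k + 1) = bf (k + 1) * gaugeProd bf k := by
  ext z
  rw [gaugeProd, Finset.prod_Icc_succ_top (by omega), mul_comm, Pi.mul_apply, gaugeProd]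

theorem sigmaGauge_zero (bf : ℕ → ℝ → ℝ) : sigmaGauge bf 0 = 0 := by
  ext z
  simp [sigmaGauge]

theorem sigmaGauge_succ (bf : ℕ → ℝ → ℝ) (k : ℕ) :
    sigmaGauge bf (k + 1) = fun z => sigmaGauge bf k z + logDeriv (bf (k + 1)) z := by
  ext z
  rw [sigmaGauge, Finset.sum_Icc_succ_top (by omega), sigmaGauge, logDeriv_apply]

theorem wronskian_zero (φ : ℕ → ℝ → ℝ) : wronskian φ 0 = 1 := by
  ext z
  simp [wronskian]

theorem upsGauge_zero (φ : ℕ → ℝ → ℝ) : upsGauge φ 0 = 0 := by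
  ext z
  simp [upsGauge, wronskian_zero]

theorem upsGauge_eq_logDeriv (φ : ℕ → ℝ → ℝ) (k : ℕ) :
    upsGauge φ k = logDeriv (wronskian φ k) := rfl

theorem wFact_succ (bf φ : ℕ → ℝ → ℝ) (k : ℕ) (z : ℝ) :
    wFact bf φ (k + 1) z = sigmaGauge bf k z + upsGauge φ (k + 1) z - upsGauge φ k z := rfl

theorem crumOp_zero (p q₀ r₀ : ℝ → ℝ) (φ bf : ℕ → ℝ → ℝ) :
    crumOp p q₀ r₀ φ bf 0 = secondOrderOp p q₀ r₀ := by
  ext y z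
  simp [secondOrderOp, qCoeff, rCoeff, sigmaGauge_zero, upsGauge_zero]

theorem qCoeff_succ (p q₀ : ℝ → ℝ) (bf : ℕ → ℝ → ℝ) (k : ℕ) :
    qCoeff p q₀ bf (k + 1) = darbouxQ p (qCoeff p q₀ bf k) (bf (k + 1)) := by
  ext z
  simp only [qCoeff, darbouxQ, sigmaGauge_succ, Nat.cast_succ]
  ring

theorem contDiffOn_wronskian {U : Set ℝ} (hU : IsOpen U) {φ : ℕ → ℝ → ℝ} {k : ℕ}
    (hφ : ∀ i < k, ContDiffOn ℝ ∞ (φ (i + 1)) U) : ContDiffOn ℝ ∞ (wronskian φ k) U := by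
  unfold wronskian
  simp only [Matrix.det_apply', Matrix.of_apply]
  exact ContDiffOn.sum fun σ _ => contDiffOn_const.mul <| contDiffOn_prod fun i _ =>
    contDiffOn_iteratedDeriv hU (hφ (σ i) (σ i).is_lt) i

/-- Seeds `φ 1, …, φ n` and gauges `bf 1, …, bf n` smooth on the open set `U`, such that the gauges
and the Wronskians `W₁, …, Wₙ` do not vanish on `U`: the data for which the intertwiners
`A₁, …, Aₙ` are smooth. -/
structure IsCrumSeed (n : ℕ) (U : Set ℝ) (φ bf : ℕ → ℝ → ℝ) : Prop where
  isOpen : IsOpen U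
  seed_smooth : ∀ j ∈ Finset.Icc 1 n, ContDiffOn ℝ ∞ (φ j) U
  gauge_smooth : ∀ j ∈ Finset.Icc 1 n, ContDiffOn ℝ ∞ (bf j) U
  gauge_ne_zero : ∀ j ∈ Finset.Icc 1 n, ∀ z ∈ U, bf j z ≠ 0
  wronskian_ne_zero_of_mem : ∀ k ∈ Finset.Icc 1 n, ∀ z ∈ U, wronskian φ k z ≠ 0

namespace IsCrumSeed

variable {n : ℕ} {U : Set ℝ} {φ bf : ℕ → ℝ → ℝ} {k : ℕ} {z : ℝ}

theorem contDiffOn_wronskian (h : IsCrumSeed n U φ bf) (hk : k ≤ n) :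
    ContDiffOn ℝ ∞ (wronskian φ k) U :=
  _root_.contDiffOn_wronskian h.isOpen fun i hi =>
    h.seed_smooth (i + 1) (Finset.mem_Icc.2 (by omega))

theorem wronskian_ne_zero (h : IsCrumSeed n U φ bf) (hk : k ≤ n) (hz : z ∈ U) :
    wronskian φ k z ≠ 0 := by
  rcases k.eq_zero_or_pos with rfl | hpos
  · simp [wronskian_zero]
  · exact h.wronskian_ne_zero_of_mem k (Finset.mem_Icc.2 ⟨hpos, hk⟩) z hz

theorem contDiffOn_gaugeProd (h : IsCrumSeed n U φ bf) (hk : k ≤ n) :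
    ContDiffOn ℝ ∞ (gaugeProd bf k) U :=
  contDiffOn_prod fun j hj => h.gauge_smooth j (Finset.Icc_subset_Icc_right hk hj)

theorem gaugeProd_ne_zero (h : IsCrumSeed n U φ bf) (hk : k ≤ n) (hz : z ∈ U) :
    gaugeProd bf k z ≠ 0 :=
  Finset.prod_ne_zero_iff.2 fun j hj =>
    h.gauge_ne_zero j (Finset.Icc_subset_Icc_right hk hj) z hz

theorem contDiffOn_upsGauge (h : IsCrumSeed n U φ bf) (hk : k ≤ n) :
    ContDiffOn ℝ ∞ (upsGauge φ k) U :=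
  contDiffOn_logDeriv h.isOpen (h.contDiffOn_wronskian hk) fun _ => h.wronskian_ne_zero hk

theorem contDiffOn_sigmaGauge (h : IsCrumSeed n U φ bf) (hk : k ≤ n) :
    ContDiffOn ℝ ∞ (sigmaGauge bf k) U :=
  ContDiffOn.sum fun j hj =>
    have hjn := Finset.Icc_subset_Icc_right hk hj
    contDiffOn_logDeriv h.isOpen (h.gauge_smooth j hjn) (h.gauge_ne_zero j hjn)

theorem contDiffOn_wFact (h : IsCrumSeed n U φ bf) (hk : k ≤ n) :
    ContDiffOn ℝ ∞ (wFact bf φ k) U :=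
  ((h.contDiffOn_sigmaGauge (by omega)).add (h.contDiffOn_upsGauge hk)).sub
    (h.contDiffOn_upsGauge (by omega))

theorem contDiffOn_crumChain (h : IsCrumSeed n U φ bf) (hk : k ≤ n) {y : ℝ → ℝ}
    (hy : ContDiffOn ℝ ∞ y U) : ContDiffOn ℝ ∞ (crumChain φ bf k y) U := by
  induction k with
  | zero => exact hy
  | succ k ih =>
    exact contDiffOn_firstOrderOp h.isOpen
      (h.gauge_smooth (k + 1) (Finset.mem_Icc.2 ⟨by omega, hk⟩)) (h.contDiffOn_wFact hk)
      (ih (by omega))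

theorem isDiffOpOn_crumChain (h : IsCrumSeed n U φ bf) (hk : k ≤ n) :
    IsDiffOpOn U k (gaugeProd bf k) (crumChain φ bf k) := by
  induction k with
  | zero =>
    rw [gaugeProd_zero]
    exact IsDiffOpOn.id U
  | succ k ih =>
    rw [gaugeProd_succ]
    exact (ih (by omega)).firstOrderOp_comp h.isOpen
      (h.gauge_smooth (k + 1) (Finset.mem_Icc.2 ⟨by omega, hk⟩)) (h.contDiffOn_wFact hk)

theorem sigmaGauge_eq_logDeriv (h : IsCrumSeed n U φ bf) (hk : k ≤ n) (hz : z ∈ U) :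
    sigmaGauge bf k z = logDeriv (gaugeProd bf k) z := by
  have hsub := Finset.Icc_subset_Icc_right (a := 1) hk
  exact (logDeriv_prod (fun j hj => h.gauge_ne_zero j (hsub hj) z hz) fun j hj =>
    differentiableAt_of_contDiffOn h.isOpen (h.gauge_smooth j (hsub hj)) hz).symm

theorem wFact_succ_eq_logDeriv (h : IsCrumSeed n U φ bf) (hk : k + 1 ≤ n) (hz : z ∈ U) :
    wFact bf φ (k + 1) z
      = logDeriv (fun x => gaugeProd bf k x * (wronskian φ (k + 1) x / wronskian φ k x)) z := by
  have hkn : k ≤ n := by omega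
  have hW := h.wronskian_ne_zero hkn hz
  have hW₁ := h.wronskian_ne_zero hk hz
  have hdW := differentiableAt_of_contDiffOn h.isOpen (h.contDiffOn_wronskian hkn) hz
  have hdW₁ := differentiableAt_of_contDiffOn h.isOpen (h.contDiffOn_wronskian hk) hz
  have hdB := differentiableAt_of_contDiffOn h.isOpen (h.contDiffOn_gaugeProd hkn) hz
  rw [logDeriv_mul (g := fun x => wronskian φ (k + 1) x / wronskian φ k x) z
      (h.gaugeProd_ne_zero hkn hz) (div_ne_zero hW₁ hW) hdB (hdW₁.fun_div hdW hW),
    logDeriv_div z hW₁ hW hdW₁ hdW, ← h.sigmaGauge_eq_logDeriv hkn hz,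
    ← upsGauge_eq_logDeriv, ← upsGauge_eq_logDeriv, wFact_succ, add_sub_assoc]

theorem crumChain_seed_of_annihilates (h : IsCrumSeed n U φ bf) (hk : k + 1 ≤ n)
    (hker : ∀ j ≤ k, ∀ i < j, EqOn (crumChain φ bf j (φ (i + 1))) 0 U) :
    EqOn (crumChain φ bf k (φ (k + 1)))
      (fun x => gaugeProd bf k x * (wronskian φ (k + 1) x / wronskian φ k x)) U := fun z hz => by
  have hratio := IsDiffOpOn.apply_mul_wronskian (k := k)
    (fun j hj => h.isDiffOpOn_crumChain (by omega : j ≤ n))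
    (fun i hi => h.seed_smooth (i + 1) (Finset.mem_Icc.2 (by omega))) hz
    (fun j hj => h.gaugeProd_ne_zero (by omega) hz) fun j hj i hi => hker j hj i hi hz
  beta_reduce
  rw [← mul_div_assoc]
  exact eq_div_of_mul_eq (h.wronskian_ne_zero (by omega) hz) hratio

theorem crumChain_annihilates_seed (h : IsCrumSeed n U φ bf) (hk : k ≤ n) :
    ∀ i < k, EqOn (crumChain φ bf k (φ (i + 1))) 0 U := by
  induction k using Nat.strong_induction_on with
  | _ k ih =>
    rcases k with _ | k
    · simp
    intro i hi z hz
    rw [crumChain, crumIntertwiner]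
    rcases Nat.lt_succ_iff_lt_or_eq.1 hi with hik | rfl
    · rw [firstOrderOp_eqOn h.isOpen (ih k k.lt_succ_self (by omega) i hik) hz, firstOrderOp_zero]
    · have hvalue := h.crumChain_seed_of_annihilates hk fun j hj => ih j (by omega) (by omega)
      rw [firstOrderOp_eqOn h.isOpen hvalue hz]
      refine firstOrderOp_apply_eq_zero _ ?_ (h.wFact_succ_eq_logDeriv hk hz)
      exact mul_ne_zero (h.gaugeProd_ne_zero (by omega) hz)
        (div_ne_zero (h.wronskian_ne_zero hk hz) (h.wronskian_ne_zero (by omega) hz))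

theorem crumChain_seed (h : IsCrumSeed n U φ bf) (hk : k + 1 ≤ n) :
    EqOn (crumChain φ bf k (φ (k + 1)))
      (fun x => gaugeProd bf k x * (wronskian φ (k + 1) x / wronskian φ k x)) U :=
  h.crumChain_seed_of_annihilates hk fun _ hj => h.crumChain_annihilates_seed (by omega)

theorem crumChain_seed_ne_zero (h : IsCrumSeed n U φ bf) (hk : k + 1 ≤ n) (hz : z ∈ U) :
    crumChain φ bf k (φ (k + 1)) z ≠ 0 := by
  rw [h.crumChain_seed hk hz]
  exact mul_ne_zero (h.gaugeProd_ne_zero (by omega) hz)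
    (div_ne_zero (h.wronskian_ne_zero hk hz) (h.wronskian_ne_zero (by omega) hz))

theorem logDeriv_crumChain_seed (h : IsCrumSeed n U φ bf) (hk : k + 1 ≤ n) :
    EqOn (logDeriv (crumChain φ bf k (φ (k + 1)))) (wFact bf φ (k + 1)) U := fun z hz => by
  have hnhds := (h.crumChain_seed hk).eventuallyEq_of_mem (h.isOpen.mem_nhds hz)
  rw [(logDeriv_congr_nhds hnhds).eq_of_nhds, h.wFact_succ_eq_logDeriv hk hz]

section Intertwining

variable {p q₀ r₀ : ℝ → ℝ}

theorem contDiffOn_qCoeff (h : IsCrumSeed n U φ bf) (hp : ContDiffOn ℝ ∞ p U)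
    (hq₀ : ContDiffOn ℝ ∞ q₀ U) (hk : k ≤ n) : ContDiffOn ℝ ∞ (qCoeff p q₀ bf k) U :=
  (hq₀.add (contDiffOn_const.mul (contDiffOn_deriv h.isOpen hp))).sub
    ((contDiffOn_const.mul hp).mul (h.contDiffOn_sigmaGauge hk))

theorem contDiffOn_rCoeff (h : IsCrumSeed n U φ bf) (hp : ContDiffOn ℝ ∞ p U)
    (hq₀ : ContDiffOn ℝ ∞ q₀ U) (hr₀ : ContDiffOn ℝ ∞ r₀ U) (hk : k ≤ n) :
    ContDiffOn ℝ ∞ (rCoeff p q₀ r₀ bf φ k) U := by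
  have hp₁ := contDiffOn_deriv h.isOpen hp
  have hp₂ := contDiffOn_deriv h.isOpen hp₁
  have hq₁ := contDiffOn_deriv h.isOpen hq₀
  have hσ := h.contDiffOn_sigmaGauge hk
  have hσ₁ := contDiffOn_deriv h.isOpen hσ
  have hυ := h.contDiffOn_upsGauge hk
  have hυ₁ := contDiffOn_deriv h.isOpen hυ
  unfold rCoeff
  fun_prop

theorem rCoeff_succ (h : IsCrumSeed n U φ bf) (hp : ContDiffOn ℝ ∞ p U)
    (hq₀ : ContDiffOn ℝ ∞ q₀ U) (hk : k + 1 ≤ n) :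
    EqOn (rCoeff p q₀ r₀ bf φ (k + 1))
      (darbouxR p (qCoeff p q₀ bf k) (rCoeff p q₀ r₀ bf φ k) (bf (k + 1)) (wFact bf φ (k + 1)))
      U := fun z hz => by
  have hdiff {f : ℝ → ℝ} (hf : ContDiffOn ℝ ∞ f U) : HasDerivAt f (deriv f z) z :=
    (differentiableAt_of_contDiffOn h.isOpen hf hz).hasDerivAt
  have hmem : k + 1 ∈ Finset.Icc 1 n := Finset.mem_Icc.2 ⟨by omega, hk⟩
  have hσ := hdiff (h.contDiffOn_sigmaGauge (by omega : k ≤ n))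
  have hυ := hdiff (h.contDiffOn_upsGauge (by omega : k ≤ n))
  have hβ := hdiff (contDiffOn_logDeriv h.isOpen (h.gauge_smooth _ hmem) (h.gauge_ne_zero _ hmem))
  have hdq : deriv (qCoeff p q₀ bf k) z = deriv q₀ z + k * deriv (deriv p) z
      - (2 * deriv p z * sigmaGauge bf k z + 2 * p z * deriv (sigmaGauge bf k) z) :=
    (((hdiff hq₀).add ((hdiff (contDiffOn_deriv h.isOpen hp)).const_mul (k : ℝ))).sub
      (((hdiff hp).const_mul 2).mul hσ)).deriv
  have hdw : deriv (wFact bf φ (k + 1)) z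
      = deriv (sigmaGauge bf k) z + deriv (upsGauge φ (k + 1)) z - deriv (upsGauge φ k) z :=
    ((hσ.add (hdiff (h.contDiffOn_upsGauge hk))).sub hυ).deriv
  have hdσ : deriv (sigmaGauge bf (k + 1)) z
      = deriv (sigmaGauge bf k) z + deriv (logDeriv (bf (k + 1))) z := by
    rw [sigmaGauge_succ]
    exact (hσ.add hβ).deriv
  rw [darbouxR, hdq, hdw, rCoeff, hdσ]
  simp only [rCoeff, qCoeff, wFact_succ, sigmaGauge_succ, Nat.cast_succ]
  ring

theorem riccati_wFact (h : IsCrumSeed n U φ bf) (hk : k + 1 ≤ n) {c : ℝ} {q r : ℝ → ℝ}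
    (heig : EqOn (secondOrderOp p q r (crumChain φ bf k (φ (k + 1))))
      (c • crumChain φ bf k (φ (k + 1))) U) (hz : z ∈ U) :
    p z * (deriv (wFact bf φ (k + 1)) z + wFact bf φ (k + 1) z ^ 2)
      + q z * wFact bf φ (k + 1) z + r z = c := by
  have hψ := h.contDiffOn_crumChain (k := k) (by omega)
    (h.seed_smooth (k + 1) (Finset.mem_Icc.2 ⟨by omega, hk⟩))
  rw [← h.logDeriv_crumChain_seed hk hz, ← (h.logDeriv_crumChain_seed hk).deriv h.isOpen hz]
  exact riccati_logDeriv (contDiffAt_of_contDiffOn h.isOpen hψ hz 2)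
    (h.crumChain_seed_ne_zero hk hz) (heig hz)

theorem intertwining_of_eigenfunction (h : IsCrumSeed n U φ bf) (hp : ContDiffOn ℝ ∞ p U)
    (hq₀ : ContDiffOn ℝ ∞ q₀ U) (hr₀ : ContDiffOn ℝ ∞ r₀ U) (hk : k + 1 ≤ n) {c : ℝ}
    (heig : EqOn (crumOp p q₀ r₀ φ bf k (crumChain φ bf k (φ (k + 1))))
      (c • crumChain φ bf k (φ (k + 1))) U)
    {y : ℝ → ℝ} (hz : z ∈ U) (hy : ContDiffAt ℝ 3 y z) :
    crumIntertwiner φ bf (k + 1) (crumOp p q₀ r₀ φ bf k y) z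
      = crumOp p q₀ r₀ φ bf (k + 1) (crumIntertwiner φ bf (k + 1) y) z := by
  have hdiff {f : ℝ → ℝ} (hf : ContDiffOn ℝ ∞ f U) : DifferentiableAt ℝ f z :=
    differentiableAt_of_contDiffOn h.isOpen hf hz
  have hC2 {f : ℝ → ℝ} (hf : ContDiffOn ℝ ∞ f U) : ContDiffAt ℝ 2 f z :=
    contDiffAt_of_contDiffOn h.isOpen hf hz 2
  have hmem : k + 1 ∈ Finset.Icc 1 n := Finset.mem_Icc.2 ⟨by omega, hk⟩
  rw [crumIntertwiner, gauged_darboux_intertwining (hdiff hp)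
    (hdiff (h.contDiffOn_qCoeff hp hq₀ (by omega)))
    (hdiff (h.contDiffOn_rCoeff hp hq₀ hr₀ (by omega))) (hC2 (h.contDiffOn_wFact hk))
    (hC2 (h.gauge_smooth _ hmem)) (h.gauge_ne_zero _ hmem z hz) hy
    (mem_of_superset (h.isOpen.mem_nhds hz) fun x hx => h.riccati_wFact hk heig hx)]
  rw [crumOp, secondOrderOp, secondOrderOp, qCoeff_succ, h.rCoeff_succ hp hq₀ hk hz]

theorem crumChain_eigenfunction (h : IsCrumSeed n U φ bf) (hp : ContDiffOn ℝ ∞ p U)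
    (hq₀ : ContDiffOn ℝ ∞ q₀ U) (hr₀ : ContDiffOn ℝ ∞ r₀ U) {lam : ℕ → ℝ}
    (heig : ∀ j ∈ Finset.Icc 1 n, EqOn (secondOrderOp p q₀ r₀ (φ j)) (lam j • φ j) U)
    (hk : k ≤ n) : ∀ j ∈ Finset.Icc 1 n,
      EqOn (crumOp p q₀ r₀ φ bf k (crumChain φ bf k (φ j))) (lam j • crumChain φ bf k (φ j)) U := by
  induction k with
  | zero => simpa only [crumOp_zero, crumChain] using heig
  | succ k ih =>
    intro j hj z hz
    have ih := ih (by omega)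
    have hψ := h.contDiffOn_crumChain (k := k) (by omega) (h.seed_smooth j hj)
    rw [crumChain, ← h.intertwining_of_eigenfunction hp hq₀ hr₀ hk
        (ih (k + 1) (Finset.mem_Icc.2 ⟨by omega, hk⟩)) hz
        (contDiffAt_of_contDiffOn h.isOpen hψ hz 3), crumIntertwiner,
      firstOrderOp_eqOn h.isOpen (ih j hj) hz, firstOrderOp_const_smul]

end Intertwining

end IsCrumSeed

theorem statement2_general (n : ℕ) {U : Set ℝ} (hU : IsOpen U)
    (p q₀ r₀ : ℝ → ℝ) (φ bf : ℕ → ℝ → ℝ) (lam : ℕ → ℝ)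
    (hp : ContDiffOn ℝ ∞ p U) (hq₀ : ContDiffOn ℝ ∞ q₀ U) (hr₀ : ContDiffOn ℝ ∞ r₀ U)
    (hφ : ∀ j ∈ Finset.Icc 1 n, ContDiffOn ℝ ∞ (φ j) U)
    (heig : ∀ j ∈ Finset.Icc 1 n, ∀ z ∈ U, secondOrderOp p q₀ r₀ (φ j) z = lam j * φ j z)
    (hb : ∀ j ∈ Finset.Icc 1 n, ContDiffOn ℝ ∞ (bf j) U)
    (hb0 : ∀ j ∈ Finset.Icc 1 n, ∀ z ∈ U, bf j z ≠ 0)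
    (hW : ∀ k ∈ Finset.Icc 1 n, ∀ z ∈ U, wronskian φ k z ≠ 0) :
    ∀ k ∈ Finset.Icc 1 n, ∀ z ∈ U, ∀ y : ℝ → ℝ, ContDiffAt ℝ 3 y z →
      crumIntertwiner φ bf k (crumOp p q₀ r₀ φ bf (k - 1) y) z
        = crumOp p q₀ r₀ φ bf k (crumIntertwiner φ bf k y) z := by
  intro k hk z hz y hy
  have hseed : IsCrumSeed n U φ bf := ⟨hU, hφ, hb, hb0, hW⟩
  obtain ⟨hk₁, hkn⟩ := Finset.mem_Icc.1 hk
  obtain ⟨k, rfl⟩ := Nat.exists_eq_add_of_le' hk₁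
  have hψ := hseed.crumChain_eigenfunction hp hq₀ hr₀ heig (by omega : k ≤ n) (k + 1) hk
  exact hseed.intertwining_of_eigenfunction hp hq₀ hr₀ hkn hψ hz hy

/-- generalized Crum formula — the operators `Tₖ` and intertwiners
`Aₖ = bₖ(D - wₖ)` defined from seed eigenfunctions and factorization gauges
satisfy `Aₖ T_{k-1} = Tₖ Aₖ` for `k = 1, …, n`. -/
theorem statement2 (n : ℕ) (a b : ℝ) (hab : a < b)
    (p q₀ r₀ : ℝ → ℝ) (φ bf : ℕ → ℝ → ℝ) (lam : ℕ → ℝ)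
    (hp : ContDiffOn ℝ (⊤ : ℕ∞) p (Ioo a b)) (hq₀ : ContDiffOn ℝ (⊤ : ℕ∞) q₀ (Ioo a b))
    (hr₀ : ContDiffOn ℝ (⊤ : ℕ∞) r₀ (Ioo a b))
    (hφ : ∀ j ∈ Finset.Icc 1 n, ContDiffOn ℝ (⊤ : ℕ∞) (φ j) (Ioo a b))
    (heig : ∀ j ∈ Finset.Icc 1 n, ∀ z ∈ Ioo a b,
      secondOrderOp p q₀ r₀ (φ j) z = lam j * φ j z)
    (hdist : ∀ j ∈ Finset.Icc 1 n, ∀ k ∈ Finset.Icc 1 n, j ≠ k → lam j ≠ lam k)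
    (hb : ∀ j ∈ Finset.Icc 1 n, ContDiffOn ℝ (⊤ : ℕ∞) (bf j) (Ioo a b))
    (hb0 : ∀ j ∈ Finset.Icc 1 n, ∀ z ∈ Ioo a b, bf j z ≠ 0)
    (hW : ∀ k ∈ Finset.Icc 1 n, ∀ z ∈ Ioo a b, wronskian φ k z ≠ 0) :
    ∀ k ∈ Finset.Icc 1 n, ∀ y : ℝ → ℝ, ContDiffOn ℝ (⊤ : ℕ∞) y (Ioo a b) →
      ∀ z ∈ Ioo a b,
        firstOrderOp (bf k) (wFact bf φ k)
            (secondOrderOp p (qCoeff p q₀ bf (k - 1)) (rCoeff p q₀ r₀ bf φ (k - 1)) y) z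
          = secondOrderOp p (qCoeff p q₀ bf k) (rCoeff p q₀ r₀ bf φ k)
              (firstOrderOp (bf k) (wFact bf φ k) y) z := by
  intro k hk y hy z hz
  exact statement2_general n isOpen_Ioo p q₀ r₀ φ bf lam hp hq₀ hr₀ hφ heig hb hb0 hW k hk z hz y
    (contDiffAt_of_contDiffOn isOpen_Ioo hy hz 3)
end

section
/- Let α ∈ ℝ, λ ∈ ℝ, and let τ, π ∈ ℝ[X] be nonzero real polynomials with deg τ = m and deg π = n. Suppose the polynomial identity (1 - X²)·(τ·π'' - 2·τ'·π' + τ''·π) - (2α+1)·X·τ·π' + (2α-1)·X·τ'·π = λ·τ·π holds in ℝ[X]. Then λ = -(n - m)·(2α + n - m). -/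
open Polynomial

/-!
Cleared of denominators, the operator sends `(τ, π)`, of degrees `m` and `n`, to a polynomial of
degree at most `m + n`, so it suffices to compare the coefficients of `X ^ (m + n)` in the
eigenvalue equation. The bilinear part `τ π'' - 2 τ' π' + τ'' π` has no term of that degree. Up to
the factor `τₘ πₙ`, its multiple by `-X ^ 2` contributes `-(n - m) ^ 2 + (n + m)` and the
first-order terms contribute `-(2 α + 1) n + (2 α - 1) m`; the sum is `-(n - m) (2 α + (n - m))`.
-/

lemma coeff_X_pow_mul_iterate_derivative {R : Type*} [Semiring R] (p : R[X]) (i k : ℕ) :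
    (X ^ i * derivative^[i] p).coeff k = k.descFactorial i • p.coeff k := by
  rw [coeff_X_pow_mul']
  split_ifs with hik
  · rw [coeff_iterate_derivative, Nat.sub_add_cancel hik]
  · rw [Nat.descFactorial_of_lt (not_le.mp hik), zero_smul]

lemma natDegree_X_pow_mul_iterate_derivative_le {R : Type*} [Semiring R] (p : R[X]) (i : ℕ) :
    (X ^ i * derivative^[i] p).natDegree ≤ p.natDegree :=
  natDegree_le_iff_coeff_eq_zero.mpr fun k hk => by
    rw [coeff_X_pow_mul_iterate_derivative, coeff_eq_zero_of_natDegree_lt hk, smul_zero]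

section BilinearDerivatives

variable {R : Type*} [CommSemiring R]

lemma X_pow_add_mul_iterate_derivative_mul (p q : R[X]) (i j : ℕ) :
    X ^ (i + j) * (derivative^[i] p * derivative^[j] q) =
      X ^ i * derivative^[i] p * (X ^ j * derivative^[j] q) := by
  rw [pow_add, mul_mul_mul_comm]

lemma natDegree_X_pow_add_mul_iterate_derivative_mul_le (p q : R[X]) (i j : ℕ) :
    (X ^ (i + j) * (derivative^[i] p * derivative^[j] q)).natDegree ≤
      p.natDegree + q.natDegree := by
  rw [X_pow_add_mul_iterate_derivative_mul]
  exact natDegree_mul_le_of_le (natDegree_X_pow_mul_iterate_derivative_le p i)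
    (natDegree_X_pow_mul_iterate_derivative_le q j)

lemma coeff_X_pow_add_mul_iterate_derivative_mul_natDegree_add (p q : R[X]) (i j : ℕ) :
    (X ^ (i + j) * (derivative^[i] p * derivative^[j] q)).coeff (p.natDegree + q.natDegree) =
      p.natDegree.descFactorial i * q.natDegree.descFactorial j *
        (p.leadingCoeff * q.leadingCoeff) := by
  rw [X_pow_add_mul_iterate_derivative_mul,
    coeff_mul_add_eq_of_natDegree_le (natDegree_X_pow_mul_iterate_derivative_le p i)
      (natDegree_X_pow_mul_iterate_derivative_le q j)]
  simp only [coeff_X_pow_mul_iterate_derivative, coeff_natDegree, nsmul_eq_mul]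
  ring

lemma coeff_X_mul_mul_derivative_natDegree_add (p q : R[X]) :
    (X * (p * derivative q)).coeff (p.natDegree + q.natDegree) =
      q.natDegree * (p.leadingCoeff * q.leadingCoeff) := by
  simpa using coeff_X_pow_add_mul_iterate_derivative_mul_natDegree_add p q 0 1

lemma coeff_X_mul_derivative_mul_natDegree_add (p q : R[X]) :
    (X * (derivative p * q)).coeff (p.natDegree + q.natDegree) =
      p.natDegree * (p.leadingCoeff * q.leadingCoeff) := by
  simpa using coeff_X_pow_add_mul_iterate_derivative_mul_natDegree_add p q 1 0

end BilinearDerivatives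

section ExceptionalGegenbauer

variable {R : Type*} [CommRing R]

/-- Hirota's bilinear second derivative `p q'' - 2 p' q' + p'' q`, which is the second-order part
of the exceptional Gegenbauer operator after clearing denominators. -/
noncomputable def hirotaSq (p q : R[X]) : R[X] :=
  p * derivative (derivative q) - 2 * derivative p * derivative q + derivative (derivative p) * q

-- The exponents are split as `i + j` so that the lemmas on `X ^ (i + j) * (p⁽ⁱ⁾ * q⁽ʲ⁾)` apply.
lemma X_sq_mul_hirotaSq (p q : R[X]) :
    X ^ 2 * hirotaSq p q =
      X ^ (0 + 2) * (derivative^[0] p * derivative^[2] q)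
        - C 2 * (X ^ (1 + 1) * (derivative^[1] p * derivative^[1] q))
        + X ^ (2 + 0) * (derivative^[2] p * derivative^[0] q) := by
  simp only [hirotaSq, Function.iterate_succ_apply, Function.iterate_zero_apply, C_ofNat]
  ring

lemma natDegree_X_sq_mul_hirotaSq_le (p q : R[X]) :
    (X ^ 2 * hirotaSq p q).natDegree ≤ p.natDegree + q.natDegree := by
  have hdeg := natDegree_X_pow_add_mul_iterate_derivative_mul_le p q
  rw [X_sq_mul_hirotaSq]
  exact natDegree_add_le_of_degree_le
    ((natDegree_sub_le_of_le (hdeg 0 2) ((natDegree_C_mul_le _ _).trans (hdeg 1 1))).trans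
      (max_self _).le) (hdeg 2 0)

lemma coeff_X_sq_mul_hirotaSq_natDegree_add (p q : R[X]) :
    (X ^ 2 * hirotaSq p q).coeff (p.natDegree + q.natDegree) =
      (((q.natDegree : R) - p.natDegree) ^ 2 - (q.natDegree + p.natDegree)) *
        (p.leadingCoeff * q.leadingCoeff) := by
  rw [X_sq_mul_hirotaSq, coeff_add, coeff_sub, coeff_C_mul]
  simp only [coeff_X_pow_add_mul_iterate_derivative_mul_natDegree_add, Nat.descFactorial_zero,
    Nat.descFactorial_one, Nat.cast_descFactorial_two, Nat.cast_one]
  ring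

lemma coeff_hirotaSq_natDegree_add (p q : R[X]) :
    (hirotaSq p q).coeff (p.natDegree + q.natDegree) = 0 := by
  rw [← coeff_X_pow_mul _ 2]
  exact coeff_eq_zero_of_natDegree_lt <|
    (natDegree_X_sq_mul_hirotaSq_le p q).trans_lt (Nat.lt_add_of_pos_right two_pos)

/-- The exceptional Gegenbauer operator `T_τ^(α)` applied to `π` and multiplied by `τ`, which
clears the denominators `τ' / τ` and `τ'' / τ`. -/
noncomputable def clearedGegenbauer (α : R) (τ π : R[X]) : R[X] :=
  (1 - X ^ 2) * hirotaSq τ π - C (2 * α + 1) * X * (τ * derivative π)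
    + C (2 * α - 1) * X * (derivative τ * π)

lemma coeff_clearedGegenbauer_natDegree_add (α : R) (τ π : R[X]) :
    (clearedGegenbauer α τ π).coeff (τ.natDegree + π.natDegree) =
      -((π.natDegree : R) - τ.natDegree) * (2 * α + ((π.natDegree : R) - τ.natDegree)) *
        (τ.leadingCoeff * π.leadingCoeff) := by
  rw [clearedGegenbauer, sub_mul, one_mul, mul_assoc (C _), mul_assoc (C _), coeff_add, coeff_sub,
    coeff_sub, coeff_C_mul, coeff_C_mul, coeff_hirotaSq_natDegree_add,
    coeff_X_sq_mul_hirotaSq_natDegree_add,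
    coeff_X_mul_mul_derivative_natDegree_add, coeff_X_mul_derivative_mul_natDegree_add]
  ring

theorem statement10_general [NoZeroDivisors R] {α lam : R} {τ π : R[X]} (hτ : τ ≠ 0) (hπ : π ≠ 0)
    (hid : clearedGegenbauer α τ π = C lam * (τ * π)) :
    lam = -((π.natDegree : R) - τ.natDegree) *
      (2 * α + ((π.natDegree : R) - τ.natDegree)) := by
  have hlead : τ.leadingCoeff * π.leadingCoeff ≠ 0 :=
    mul_ne_zero (leadingCoeff_ne_zero.mpr hτ) (leadingCoeff_ne_zero.mpr hπ)
  refine mul_right_cancel₀ hlead ?_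
  calc lam * (τ.leadingCoeff * π.leadingCoeff)
      = (C lam * (τ * π)).coeff (τ.natDegree + π.natDegree) := by
        rw [coeff_C_mul, coeff_mul_degree_add_degree]
    _ = (clearedGegenbauer α τ π).coeff (τ.natDegree + π.natDegree) := by rw [hid]
    _ = _ := coeff_clearedGegenbauer_natDegree_add α τ π

end ExceptionalGegenbauer

/-- if the cleared eigenvalue identity
`(1-X²)(τπ'' - 2τ'π' + τ''π) - (2α+1)Xτπ' + (2α-1)Xτ'π = λτπ` holds in `ℝ[X]`
with `deg τ = m` and `deg π = n`, then `λ = -(n-m)(2α + n - m)`. -/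
theorem statement10 (α lam : ℝ) (m n : ℕ) (τ π : Polynomial ℝ)
    (hτ : τ ≠ 0) (hπ : π ≠ 0)
    (hm : τ.natDegree = m) (hn : π.natDegree = n)
    (hid : (1 - X ^ 2) *
        (τ * derivative (derivative π) - 2 * derivative τ * derivative π
          + derivative (derivative τ) * π)
      - C (2 * α + 1) * X * (τ * derivative π)
      + C (2 * α - 1) * X * (derivative τ * π)
      = C lam * (τ * π)) :
    lam = -((n : ℝ) - m) * (2 * α + ((n : ℝ) - m)) := by
  subst hm hn
  exact statement10_general hτ hπ hid
end

section
/- Let α > -1/2 and let τ ∈ ℝ[X] be a polynomial with no zeros on [-1,1]. Let π_i, π_j ∈ ℝ[X] and λ_i, λ_j ∈ ℝ with λ_i ≠ λ_j, and suppose that for each (π, λ) ∈ {(π_i, λ_i), (π_j, λ_j)} the polynomial identity (1 - X²)·(τ·π'' - 2·τ'·π' + τ''·π) - (2α+1)·X·τ·π' + (2α-1)·X·τ'·π = λ·τ·π holds in ℝ[X]. Then ∫_{-1}^{1} π_i(z)·π_j(z)·(1-z²)^{α-1/2}/τ(z)² dz = 0. -/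
open Polynomial

/-!
In Sturm–Liouville form the eigenvalue equation reads `(P y')' + Q y = λ W y`, where
`P = (1 - z²)^(α + 1/2) / τ²`, `W = (1 - z²)^(α - 1/2) / τ²` and `Q` does not depend on `λ`. The
potential cancels in the Lagrange identity, so that `P (u' v - u v')` is a primitive of
`(λ - μ) u v W`. As `α + 1/2 > 0`, this primitive is continuous on `[-1, 1]` and vanishes at both
endpoints; as `α - 1/2 > -1`, its derivative is integrable.
-/

section SturmLiouville

section Field

variable {𝕜 : Type*} [NontriviallyNormedField 𝕜]

/-- `y` solves the Sturm–Liouville equation `(P y')' + Q y = lam w y` at every point of `s`. Only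
`y` and the quasi-derivative `P y'` have to be differentiable. -/
def IsSturmLiouvilleSolutionOn (P Q w : 𝕜 → 𝕜) (lam : 𝕜) (y : 𝕜 → 𝕜) (s : Set 𝕜) : Prop :=
  ∀ x ∈ s, DifferentiableAt 𝕜 y x ∧
    HasDerivAt (fun t => P t * deriv y t) (lam * w x * y x - Q x * y x) x

/-- The Lagrange bracket `P (u' v - u v')`, whose vanishing at the endpoints of an interval is the
boundary condition making the Sturm–Liouville operator symmetric. -/
noncomputable def lagrangeBracket (P u v : 𝕜 → 𝕜) (x : 𝕜) : 𝕜 :=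
  P x * (deriv u x * v x - u x * deriv v x)

theorem IsSturmLiouvilleSolutionOn.hasDerivAt_lagrangeBracket {P Q w u v : 𝕜 → 𝕜} {lam mu : 𝕜}
    {s : Set 𝕜} (hu : IsSturmLiouvilleSolutionOn P Q w lam u s)
    (hv : IsSturmLiouvilleSolutionOn P Q w mu v s) {x : 𝕜} (hx : x ∈ s) :
    HasDerivAt (lagrangeBracket P u v) ((lam - mu) * (u x * v x * w x)) x := by
  obtain ⟨hu₁, hu₂⟩ := hu x hx
  obtain ⟨hv₁, hv₂⟩ := hv x hx
  have hbracket : lagrangeBracket P u v =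
      (fun t => P t * deriv u t) * v - u * fun t => P t * deriv v t := by
    funext t
    simp only [lagrangeBracket, Pi.sub_apply, Pi.mul_apply]
    ring
  rw [hbracket]
  exact ((hu₂.mul hv₁.hasDerivAt).sub (hu₁.hasDerivAt.mul hv₂)).congr_deriv (by ring)

end Field

theorem IsSturmLiouvilleSolutionOn.integral_mul_mul_eq_zero {P Q w u v : ℝ → ℝ} {lam mu a b : ℝ}
    (hu : IsSturmLiouvilleSolutionOn P Q w lam u (Set.Ioo a b))
    (hv : IsSturmLiouvilleSolutionOn P Q w mu v (Set.Ioo a b)) (hab : a ≤ b) (hne : lam ≠ mu)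
    (hcont : ContinuousOn (lagrangeBracket P u v) (Set.Icc a b))
    (hboundary : lagrangeBracket P u v a = lagrangeBracket P u v b)
    (hint : IntervalIntegrable (fun x => u x * v x * w x) MeasureTheory.volume a b) :
    ∫ x in a..b, u x * v x * w x = 0 := by
  have hftc : (lam - mu) * ∫ x in a..b, u x * v x * w x =
      lagrangeBracket P u v b - lagrangeBracket P u v a := by
    rw [← intervalIntegral.integral_const_mul]
    exact intervalIntegral.integral_eq_sub_of_hasDerivAt_of_le hab hcont
      (fun x hx => hu.hasDerivAt_lagrangeBracket hv hx) (hint.const_mul (lam - mu))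
  rw [hboundary, sub_self] at hftc
  exact (mul_eq_zero.mp hftc).resolve_left (sub_ne_zero.mpr hne)

end SturmLiouville

theorem one_sub_sq_pos_of_mem_Ioo {z : ℝ} (hz : z ∈ Set.Ioo (-1 : ℝ) 1) : 0 < 1 - z ^ 2 := by
  nlinarith [hz.1, hz.2]

theorem intervalIntegrable_one_sub_sq_rpow {s : ℝ} (hs : -1 < s) :
    IntervalIntegrable (fun z : ℝ => (1 - z ^ 2) ^ s) MeasureTheory.volume (-1) 1 := by
  have hright : IntervalIntegrable (fun z : ℝ => (1 - z ^ 2) ^ s) MeasureTheory.volume 0 1 := by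
    have hsing : IntervalIntegrable (fun z : ℝ => (1 - z) ^ s) MeasureTheory.volume 0 1 := by
      simpa using (intervalIntegral.intervalIntegrable_rpow' (a := 1) (b := 0) hs).comp_sub_left 1
    have hcont : ContinuousOn (fun z : ℝ => (1 + z) ^ s) (Set.uIcc 0 1) := by
      rw [Set.uIcc_of_le zero_le_one]
      exact ContinuousOn.rpow_const (by fun_prop) fun z hz => Or.inl (by linarith [hz.1])
    refine (hsing.mul_continuousOn hcont).congr fun z hz => ?_
    rw [Set.uIoc_of_le zero_le_one] at hz
    rw [← Real.mul_rpow (by linarith [hz.2]) (by linarith [hz.1])]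
    ring_nf
  have hleft : IntervalIntegrable (fun z : ℝ => (1 - z ^ 2) ^ s) MeasureTheory.volume (-1) 0 := by
    simpa using (hright.comp_sub_left 0).symm
  exact hleft.trans hright

section ExceptionalGegenbauer

/-- The exceptional Gegenbauer operator `T^{(α)}_τ` on functions, cleared of denominators: the
value of `τ T^{(α)}_τ y` at `z`. -/
noncomputable def clearedExceptionalGegenbauer (α : ℝ) (τ y : ℝ → ℝ) (z : ℝ) : ℝ :=
  (1 - z ^ 2) *
      (τ z * deriv (deriv y) z - 2 * deriv τ z * deriv y z + deriv (deriv τ) z * y z)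
    - (2 * α + 1) * z * (τ z * deriv y z)
    + (2 * α - 1) * z * (deriv τ z * y z)

/-- The weight `W^{(α)}_τ` of the exceptional Gegenbauer operator. -/
noncomputable def exceptionalGegenbauerWeight (α : ℝ) (τ : ℝ → ℝ) (z : ℝ) : ℝ :=
  (1 - z ^ 2) ^ (α - 1 / 2) / τ z ^ 2

/-- The coefficient `P` in the Sturm–Liouville form `(P y')' + Q y = λ W y` of the exceptional
Gegenbauer equation. It equals `(1 - z²) W` inside `(-1, 1)`; written as a single
power, it is visibly continuous up to the endpoints for `α ≥ -1/2`. -/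
noncomputable def exceptionalGegenbauerLeadingCoeff (α : ℝ) (τ : ℝ → ℝ) (z : ℝ) : ℝ :=
  (1 - z ^ 2) ^ (α + 1 / 2) / τ z ^ 2

/-- The potential `Q` in the Sturm–Liouville form `(P y')' + Q y = λ W y` of the exceptional
Gegenbauer equation. -/
noncomputable def exceptionalGegenbauerPotential (α : ℝ) (τ : ℝ → ℝ) (z : ℝ) : ℝ :=
  ((1 - z ^ 2) * deriv (deriv τ) z + (2 * α - 1) * z * deriv τ z) / τ z *
    exceptionalGegenbauerWeight α τ z

variable {α : ℝ} {τ : ℝ → ℝ}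

theorem exceptionalGegenbauerLeadingCoeff_eq_mul_weight {z : ℝ} (hz : z ∈ Set.Ioo (-1 : ℝ) 1) :
    exceptionalGegenbauerLeadingCoeff α τ z = (1 - z ^ 2) * exceptionalGegenbauerWeight α τ z := by
  have hsplit : (1 - z ^ 2) ^ (α + 1 / 2) = (1 - z ^ 2) ^ (α - 1 / 2) * (1 - z ^ 2) := by
    rw [← Real.rpow_add_one (one_sub_sq_pos_of_mem_Ioo hz).ne']
    ring_nf
  rw [exceptionalGegenbauerLeadingCoeff, exceptionalGegenbauerWeight, hsplit]
  ring

theorem hasDerivAt_exceptionalGegenbauerLeadingCoeff {z : ℝ} (hz : z ∈ Set.Ioo (-1 : ℝ) 1)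
    (hτ : DifferentiableAt ℝ τ z) (hτ0 : τ z ≠ 0) :
    HasDerivAt (exceptionalGegenbauerLeadingCoeff α τ)
      (-(2 * α + 1) * z * exceptionalGegenbauerWeight α τ z
        - 2 * deriv τ z / τ z * exceptionalGegenbauerLeadingCoeff α τ z) z := by
  have hpow : HasDerivAt (fun x : ℝ => (1 - x ^ 2) ^ (α + 1 / 2))
      (-(2 * z) * (α + 1 / 2) * (1 - z ^ 2) ^ (α + 1 / 2 - 1)) z := by
    refine HasDerivAt.rpow_const ?_ (Or.inl (one_sub_sq_pos_of_mem_Ioo hz).ne')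
    simpa using (hasDerivAt_pow 2 z).const_sub 1
  have hsq : HasDerivAt (fun x => τ x ^ 2) (2 * τ z * deriv τ z) z := by
    simpa using hτ.hasDerivAt.fun_pow 2
  refine (hpow.div hsq (pow_ne_zero 2 hτ0)).congr_deriv ?_
  rw [exceptionalGegenbauerWeight, exceptionalGegenbauerLeadingCoeff,
    show α + 1 / 2 - 1 = α - 1 / 2 by ring]
  field_simp

theorem isSturmLiouvilleSolutionOn_of_exceptionalGegenbauer {y : ℝ → ℝ} {lam : ℝ}
    (hτ : ∀ z ∈ Set.Ioo (-1 : ℝ) 1, DifferentiableAt ℝ τ z)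
    (hτ0 : ∀ z ∈ Set.Ioo (-1 : ℝ) 1, τ z ≠ 0)
    (hy : ∀ z ∈ Set.Ioo (-1 : ℝ) 1, DifferentiableAt ℝ y z)
    (hy' : ∀ z ∈ Set.Ioo (-1 : ℝ) 1, DifferentiableAt ℝ (deriv y) z)
    (heq : ∀ z ∈ Set.Ioo (-1 : ℝ) 1,
      clearedExceptionalGegenbauer α τ y z = lam * (τ z * y z)) :
    IsSturmLiouvilleSolutionOn (exceptionalGegenbauerLeadingCoeff α τ)
      (exceptionalGegenbauerPotential α τ) (exceptionalGegenbauerWeight α τ) lam y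
      (Set.Ioo (-1) 1) := by
  intro z hz
  refine ⟨hy z hz, ((hasDerivAt_exceptionalGegenbauerLeadingCoeff hz (hτ z hz) (hτ0 z hz)).mul
    (hy' z hz).hasDerivAt).congr_deriv ?_⟩
  have hτz := hτ0 z hz
  have heqz := heq z hz
  rw [clearedExceptionalGegenbauer] at heqz
  rw [exceptionalGegenbauerLeadingCoeff_eq_mul_weight hz, exceptionalGegenbauerPotential]
  field_simp
  linear_combination exceptionalGegenbauerWeight α τ z * heqz

theorem exceptionalGegenbauerLeadingCoeff_eq_zero (hα : -1 / 2 < α) {z : ℝ} (hz : z ^ 2 = 1) :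
    exceptionalGegenbauerLeadingCoeff α τ z = 0 := by
  have hexp : α + 1 / 2 ≠ 0 := by linarith
  rw [exceptionalGegenbauerLeadingCoeff, hz, sub_self, Real.zero_rpow hexp, zero_div]

theorem continuousOn_exceptionalGegenbauerLeadingCoeff (hα : -1 / 2 ≤ α) {s : Set ℝ}
    (hτ : ContinuousOn τ s) (hτ0 : ∀ z ∈ s, τ z ≠ 0) :
    ContinuousOn (exceptionalGegenbauerLeadingCoeff α τ) s := by
  have hpow : ContinuousOn (fun z : ℝ => (1 - z ^ 2) ^ (α + 1 / 2)) s :=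
    ContinuousOn.rpow_const (by fun_prop) fun _ _ => Or.inr (by linarith)
  exact hpow.div (hτ.pow 2) fun z hz => pow_ne_zero 2 (hτ0 z hz)

theorem intervalIntegrable_mul_exceptionalGegenbauerWeight (hα : -1 / 2 < α)
    (hτ : ContinuousOn τ (Set.Icc (-1) 1)) (hτ0 : ∀ z ∈ Set.Icc (-1 : ℝ) 1, τ z ≠ 0)
    {f : ℝ → ℝ} (hf : ContinuousOn f (Set.Icc (-1) 1)) :
    IntervalIntegrable (fun z => f z * exceptionalGegenbauerWeight α τ z)
      MeasureTheory.volume (-1) 1 := by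
  have hcont : ContinuousOn (fun z => f z / τ z ^ 2) (Set.uIcc (-1) 1) := by
    rw [Set.uIcc_of_le (by norm_num)]
    exact hf.div (hτ.pow 2) fun z hz => pow_ne_zero 2 (hτ0 z hz)
  refine ((intervalIntegrable_one_sub_sq_rpow (s := α - 1 / 2) (by linarith)).mul_continuousOn
    hcont).congr fun z _ => ?_
  rw [exceptionalGegenbauerWeight]
  ring

theorem statement11_general (hα : -1 / 2 < α) (hτ : ContDiff ℝ 2 τ)
    (hτ0 : ∀ z ∈ Set.Icc (-1 : ℝ) 1, τ z ≠ 0) {u v : ℝ → ℝ} (hu : ContDiff ℝ 2 u)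
    (hv : ContDiff ℝ 2 v) {lam mu : ℝ} (hne : lam ≠ mu)
    (hu_eq : ∀ z ∈ Set.Ioo (-1 : ℝ) 1,
      clearedExceptionalGegenbauer α τ u z = lam * (τ z * u z))
    (hv_eq : ∀ z ∈ Set.Ioo (-1 : ℝ) 1,
      clearedExceptionalGegenbauer α τ v z = mu * (τ z * v z)) :
    ∫ z in (-1 : ℝ)..1, u z * v z * exceptionalGegenbauerWeight α τ z = 0 := by
  have hsol {y : ℝ → ℝ} {ν : ℝ} (hy : ContDiff ℝ 2 y)
      (heq : ∀ z ∈ Set.Ioo (-1 : ℝ) 1,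
        clearedExceptionalGegenbauer α τ y z = ν * (τ z * y z)) :=
    isSturmLiouvilleSolutionOn_of_exceptionalGegenbauer
      (fun z _ => hτ.differentiable two_ne_zero z)
      (fun z hz => hτ0 z (Set.Ioo_subset_Icc_self hz))
      (fun z _ => hy.differentiable two_ne_zero z) (fun z _ => hy.differentiable_deriv_two z) heq
  have hwronskian : Continuous fun z => deriv u z * v z - u z * deriv v z :=
    ((hu.continuous_deriv one_le_two).mul hv.continuous).sub
      (hu.continuous.mul (hv.continuous_deriv one_le_two))
  refine (hsol hu hu_eq).integral_mul_mul_eq_zero (hsol hv hv_eq) (by norm_num) hne ?_ ?_ ?_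
  · exact (continuousOn_exceptionalGegenbauerLeadingCoeff hα.le hτ.continuous.continuousOn
      hτ0).mul hwronskian.continuousOn
  · simp only [lagrangeBracket, exceptionalGegenbauerLeadingCoeff_eq_zero hα (one_pow 2),
      exceptionalGegenbauerLeadingCoeff_eq_zero hα (neg_one_sq), zero_mul]
  · exact intervalIntegrable_mul_exceptionalGegenbauerWeight hα hτ.continuous.continuousOn hτ0
      (hu.continuous.mul hv.continuous).continuousOn

theorem clearedExceptionalGegenbauer_eval (α : ℝ) (τ p : ℝ[X]) (z : ℝ) :
    clearedExceptionalGegenbauer α (fun x => τ.eval x) (fun x => p.eval x) z =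
      ((1 - X ^ 2) *
          (τ * derivative (derivative p) - 2 * derivative τ * derivative p
            + derivative (derivative τ) * p)
        - C (2 * α + 1) * X * (τ * derivative p)
        + C (2 * α - 1) * X * (derivative τ * p)).eval z := by
  have hderiv (q : ℝ[X]) : deriv (fun x => q.eval x) = fun x => (derivative q).eval x :=
    funext fun _ => q.deriv
  simp only [clearedExceptionalGegenbauer, hderiv, eval_add, eval_sub, eval_mul, eval_pow, eval_X,
    eval_C, eval_one, eval_ofNat]

end ExceptionalGegenbauer

/-- eigenpolynomials of the exceptional Gegenbauer operator with
distinct eigenvalues are orthogonal with respect to the weight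
`(1-z²)^{α-1/2}/τ(z)²` on `[-1,1]`. -/
theorem statement11 (α : ℝ) (hα : -1/2 < α) (τ πi πj : Polynomial ℝ)
    (lami lamj : ℝ) (hne : lami ≠ lamj)
    (hτ0 : ∀ z ∈ Set.Icc (-1 : ℝ) 1, τ.eval z ≠ 0)
    (hi : (1 - X ^ 2) *
        (τ * derivative (derivative πi) - 2 * derivative τ * derivative πi
          + derivative (derivative τ) * πi)
      - C (2 * α + 1) * X * (τ * derivative πi)
      + C (2 * α - 1) * X * (derivative τ * πi)
      = C lami * (τ * πi))
    (hj : (1 - X ^ 2) *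
        (τ * derivative (derivative πj) - 2 * derivative τ * derivative πj
          + derivative (derivative τ) * πj)
      - C (2 * α + 1) * X * (τ * derivative πj)
      + C (2 * α - 1) * X * (derivative τ * πj)
      = C lamj * (τ * πj)) :
    ∫ z in (-1 : ℝ)..1,
      πi.eval z * πj.eval z * (1 - z ^ 2) ^ (α - 1/2 : ℝ) / (τ.eval z) ^ 2 = 0 := by
  have hsmooth (p : ℝ[X]) : ContDiff ℝ 2 fun x => p.eval x := p.contDiff_aeval 2
  simpa only [exceptionalGegenbauerWeight, mul_div_assoc] using
    statement11_general hα (hsmooth τ) hτ0 (hsmooth πi) (hsmooth πj) hne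
      (fun z _ => by rw [clearedExceptionalGegenbauer_eval, hi, eval_C_mul, eval_mul])
      (fun z _ => by rw [clearedExceptionalGegenbauer_eval, hj, eval_C_mul, eval_mul])
end
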